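/- arXiv:1406.3464 — 5 statements merged into one kernel-verified Lean document; each statement's English description precedes it below -/
import Mathlib

section
/- If every n-maximal subgroup of a finite group G is K-𝔘-subnormal in G, then every (n+1)-maximal subgroup of G is K-𝔘-subnormal in G. -/
open Subgroup

/-- A finite group is supersoluble if it has a normal series, all of whose terms are
normal in the whole group, with cyclic factors. -/
def IsSupersoluble (G : Type*) [Group G] : Prop :=
  ∃ (n : ℕ) (c : Fin (n + 1) → Subgroup G) (hc : ∀ i, (c i).Normal),
    c 0 = ⊥ ∧ c (Fin.last n) = ⊤ ∧
    ∀ i : Fin n, c i.castSucc ≤ c i.succ ∧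
      haveI := (hc i.castSucc).subgroupOf (c i.succ)
      IsCyclic (↥(c i.succ) ⧸ ((c i.castSucc).subgroupOf (c i.succ)))

/-- `H` is a maximal subgroup of `K`, where `H ≤ K` are subgroups of a common group. -/
def IsMaximalIn {G : Type*} [Group G] (H K : Subgroup G) : Prop :=
  H ≤ K ∧ IsCoatom (H.subgroupOf K)

/-- The `n`-maximal subgroups of `G`: `0`-maximal is `G` itself, and an `(n+1)`-maximal
subgroup is a maximal subgroup of some `n`-maximal subgroup. -/
def IsNMaximal {G : Type*} [Group G] : ℕ → Subgroup G → Prop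
  | 0, H => H = ⊤
  | n + 1, H => ∃ K : Subgroup G, IsNMaximal n K ∧ IsMaximalIn H K

/-- `H` is `K`-`𝔘`-subnormal in `K`: there is a chain of subgroups
`H = H₀ ≤ H₁ ≤ ⋯ ≤ Hₜ = K` such that at each step either `H_{i-1}` is normal in `H_i`
or `H_i` modulo the core of `H_{i-1}` in `H_i` is supersoluble. -/
def IsKUSubnormalIn {G : Type*} [Group G] (H K : Subgroup G) : Prop :=
  ∃ (n : ℕ) (c : Fin (n + 1) → Subgroup G),
    c 0 = H ∧ c (Fin.last n) = K ∧
    ∀ i : Fin n, c i.castSucc ≤ c i.succ ∧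
      (((c i.castSucc).subgroupOf (c i.succ)).Normal ∨
        IsSupersoluble (↥(c i.succ) ⧸ ((c i.castSucc).subgroupOf (c i.succ)).normalCore))

/-- `H` is `K`-`𝔘`-subnormal in `G`. -/
def IsKUSubnormal {G : Type*} [Group G] (H : Subgroup G) : Prop :=
  IsKUSubnormalIn H ⊤

/-- `H` is `𝔘`-subnormal in `G`: there is a chain of subgroups
`H = H₀ ≤ H₁ ≤ ⋯ ≤ Hₙ = G` with `H_i` modulo the core of `H_{i-1}` in `H_i`
supersoluble at each step. -/
def IsUSubnormal {G : Type*} [Group G] (H : Subgroup G) : Prop :=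
  ∃ (n : ℕ) (c : Fin (n + 1) → Subgroup G),
    c 0 = H ∧ c (Fin.last n) = ⊤ ∧
    ∀ i : Fin n, c i.castSucc ≤ c i.succ ∧
      IsSupersoluble (↥(c i.succ) ⧸ ((c i.castSucc).subgroupOf (c i.succ)).normalCore)

/-- The supersoluble residual `G^𝔘` of `G`: the intersection of all normal subgroups `N`
of `G` with `G/N` supersoluble. -/
def ssResidual (G : Type*) [Group G] : Subgroup G :=
  ⨅ N ∈ {N : Subgroup G | ∃ hN : N.Normal, haveI := hN; IsSupersoluble (G ⧸ N)}, N

/-- `N` is a minimal normal subgroup of `G`. -/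
def IsMinimalNormal {G : Type*} [Group G] (N : Subgroup G) : Prop :=
  N.Normal ∧ N ≠ ⊥ ∧ ∀ M : Subgroup G, M.Normal → M ≤ N → M ≠ ⊥ → M = N

/-- `G` is minimal nonsupersoluble: not supersoluble, but all proper subgroups are. -/
def IsMinimalNonsupersoluble (G : Type*) [Group G] : Prop :=
  ¬ IsSupersoluble G ∧ ∀ H : Subgroup G, H ≠ ⊤ → IsSupersoluble H

/-- `G` is an `SDH`-group: minimal nonsupersoluble with `G^𝔘` a minimal normal subgroup. -/
def IsSDH (G : Type*) [Group G] : Prop :=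
  IsMinimalNonsupersoluble G ∧ IsMinimalNormal (ssResidual G)

/-- `H` is a Sylow `p`-subgroup of its ambient (finite) group. -/
def IsSylowSubgroup {G : Type*} [Group G] (p : ℕ) (H : Subgroup G) : Prop :=
  IsPGroup p H ∧ ¬ p ∣ H.index

/-- A finite group is Ore dispersive if, enumerating the prime divisors of `|G|`
in decreasing order as `p₁ > p₂ > ⋯ > pₙ`, for every `i` it has a normal subgroup of
order `p₁^{a₁} ⋯ p_i^{a_i}`. -/
def OreDispersive (G : Type*) [Group G] : Prop :=
  ∀ p : ℕ, p.Prime → ∃ N : Subgroup G, N.Normal ∧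
    Nat.card N =
      ∏ q ∈ (Nat.card G).primeFactors.filter (fun q => p ≤ q),
        q ^ (Nat.card G).factorization q

/-- `A/B` is a chief factor of `G`. -/
def IsChiefFactor {G : Type*} [Group G] (A B : Subgroup G) : Prop :=
  A.Normal ∧ B ≤ A ∧ ∃ hB : B.Normal,
    haveI := hB
    IsMinimalNormal (A.map (QuotientGroup.mk' B))

/-- The subgroups `H` and `K` of `G` are conjugate in `G`. -/
def ConjSubgroup {G : Type*} [Group G] (H K : Subgroup G) : Prop :=
  ∃ g : G, K = H.map (MulAut.conj g).toMonoidHom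

/-- The Frattini subgroup of a subgroup `H` of `G`, as a subgroup of `G`. -/
def frattiniIn {G : Type*} [Group G] (H : Subgroup G) : Subgroup G :=
  (frattini H).map H.subtype

/-- `G = P ⋊ (Q ⋊ R)` as an internal statement about subgroups `P`, `Q`, `R` of `G`. -/
def IsInternalSemidirect3 {G : Type*} [Group G] (P Q R : Subgroup G) : Prop :=
  P.Normal ∧ P ⊓ (Q ⊔ R) = ⊥ ∧ P ⊔ Q ⊔ R = ⊤ ∧
    (Q.subgroupOf (Q ⊔ R)).Normal ∧ Q ⊓ R = ⊥

/-- `G = P ⋊ (Q ⋊ (R ⋊ T))` as an internal statement about subgroups of `G`. -/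
def IsInternalSemidirect4 {G : Type*} [Group G] (P Q R T : Subgroup G) : Prop :=
  P.Normal ∧ P ⊓ (Q ⊔ R ⊔ T) = ⊥ ∧ P ⊔ Q ⊔ R ⊔ T = ⊤ ∧
    (Q.subgroupOf (Q ⊔ R ⊔ T)).Normal ∧ Q ⊓ (R ⊔ T) = ⊥ ∧
    (R.subgroupOf (R ⊔ T)).Normal ∧ R ⊓ T = ⊥

namespace KU

/-- `B/A` is cyclic, elementwise. -/
def Cyc {G : Type*} [Group G] (A B : Subgroup G) : Prop :=
  A ≤ B ∧ ∃ b ∈ B, ∀ x ∈ B, ∃ k : ℤ, x * b ^ k ∈ A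

/-- normal cyclic step -/
def Step {G : Type*} [Group G] (A B : Subgroup G) : Prop :=
  A.Normal ∧ B.Normal ∧ Cyc A B

/-- chains -/
def Ch {G : Type*} [Group G] (A B : Subgroup G) : Prop :=
  Relation.ReflTransGen Step A B

theorem chain_of_fin {α : Type*} (r : α → α → Prop) (n : ℕ) (c : Fin (n + 1) → α)
    (h : ∀ i : Fin n, r (c i.castSucc) (c i.succ)) :
    Relation.ReflTransGen r (c 0) (c (Fin.last n)) := by
  have : ∀ i : Fin (n + 1), Relation.ReflTransGen r (c 0) (c i) := by
    intro i
    induction i using Fin.induction with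
    | zero => exact Relation.ReflTransGen.refl
    | succ i ih => exact ih.tail (h i)
  exact this _

theorem fin_of_chain {α : Type*} (r : α → α → Prop) {a b : α} (h : Relation.ReflTransGen r a b) :
    ∃ (n : ℕ) (c : Fin (n + 1) → α), c 0 = a ∧ c (Fin.last n) = b ∧
      ∀ i : Fin n, r (c i.castSucc) (c i.succ) := by
  induction h with
  | refl => exact ⟨0, fun _ => a, rfl, rfl, fun i => i.elim0⟩
  | @tail b d _ hbd ih =>
    obtain ⟨n, c, h0, h1, h2⟩ := ih
    refine ⟨n + 1, Fin.snoc c d, ?_, by simp, ?_⟩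
    · rw [← h0]
      exact Fin.snoc_castSucc (α := fun _ => α) d c 0
    · intro i
      refine Fin.lastCases ?_ (fun j => ?_) i
      · rw [Fin.succ_last, Fin.snoc_castSucc, Fin.snoc_last, h1]; exact hbd
      · rw [Fin.snoc_castSucc, Fin.succ_castSucc, Fin.snoc_castSucc]; exact h2 j

theorem cyc_iff {G : Type*} [Group G] (A B : Subgroup G) [hA : A.Normal] (hAB : A ≤ B) :
    Cyc A B ↔ IsCyclic (↥B ⧸ (A.subgroupOf B)) := by
  constructor
  · rintro ⟨_, b, hb, h⟩
    refine ⟨⟨QuotientGroup.mk ⟨b, hb⟩, fun x => ?_⟩⟩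
    induction x using QuotientGroup.induction_on with
    | H x =>
      obtain ⟨k, hk⟩ := h x x.2
      refine ⟨-k, ?_⟩
      change (QuotientGroup.mk _ : ↥B ⧸ (A.subgroupOf B)) ^ (-k) = _
      rw [← QuotientGroup.mk_zpow, QuotientGroup.eq, Subgroup.mem_subgroupOf]
      have := hA.conj_mem _ hk (b ^ k)
      have e : b ^ k * (↑x * b ^ k) * (b ^ k)⁻¹ = b ^ k * x := by group
      rw [e] at this
      simpa using this
  · intro hc
    obtain ⟨g, hg⟩ := hc.exists_generator
    obtain ⟨b, rfl⟩ := QuotientGroup.mk_surjective g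
    refine ⟨hAB, b, b.2, fun x hx => ?_⟩
    obtain ⟨k, hk⟩ := hg (QuotientGroup.mk ⟨x, hx⟩)
    change (QuotientGroup.mk _ : ↥B ⧸ (A.subgroupOf B)) ^ k = _ at hk
    rw [← QuotientGroup.mk_zpow, QuotientGroup.eq, Subgroup.mem_subgroupOf] at hk
    refine ⟨-k, ?_⟩
    have := hA.conj_mem _ hk (b.1 ^ k)
    simpa [mul_assoc] using this

theorem ss_iff (G : Type*) [Group G] : IsSupersoluble G ↔ Ch (⊥ : Subgroup G) ⊤ := by
  constructor
  · rintro ⟨n, c, hc, h0, h1, h2⟩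
    rw [← h0, ← h1]
    refine chain_of_fin _ n c fun i => ⟨hc _, hc _, ?_⟩
    have := hc i.castSucc
    exact (cyc_iff _ _ (h2 i).1).2 (h2 i).2
  · intro h
    have h' : Relation.ReflTransGen (Step (G := G)) ⊥ ⊤ := h
    obtain ⟨n, c, h0, h1, h2⟩ := fin_of_chain _ h'
    have hc : ∀ i, (c i).Normal := by
      intro i
      refine Fin.cases ?_ (fun j => (h2 j).2.1) i
      rw [h0]; infer_instance
    refine ⟨n, c, hc, h0, h1, fun i => ⟨(h2 i).2.2.1, ?_⟩⟩
    have := hc i.castSucc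
    exact (cyc_iff _ _ (h2 i).2.2.1).1 (h2 i).2.2

theorem Cyc.inf {G : Type*} [Group G] {A B : Subgroup G} [hA : A.Normal] (h : Cyc A B)
    (P : Subgroup G) : Cyc (A ⊓ P) (B ⊓ P) := by
  have := hA
  have h1 := (cyc_iff A B h.1).1 h
  refine ⟨inf_le_inf_right _ h.1, ?_⟩
  let f : ↥(B ⊓ P) →* ↥B ⧸ (A.subgroupOf B) :=
    (QuotientGroup.mk' _).comp (Subgroup.inclusion inf_le_left)
  obtain ⟨⟨_, ⟨b, rfl⟩⟩, hb⟩ := (inferInstance : IsCyclic f.range).exists_generator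
  refine ⟨b, b.2, fun x hx => ?_⟩
  obtain ⟨k, hk⟩ := hb ⟨f ⟨x, hx⟩, ⟨_, rfl⟩⟩
  have hk' : f b ^ k = f ⟨x, hx⟩ := congrArg Subtype.val hk
  refine ⟨-k, ?_, ?_⟩
  · have : f (⟨x, hx⟩ * b ^ (-k)) = 1 := by
      rw [map_mul, map_zpow, ← hk']; group
    have h3 := (QuotientGroup.eq_one_iff _).1 this
    simpa [Subgroup.mem_subgroupOf] using h3
  · exact P.mul_mem hx.2 (P.zpow_mem b.2.2 _)

theorem Step.comap {G H : Type*} [Group G] [Group H] (f : H →* G) {A B : Subgroup G}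
    (h : Step A B) : Step (A.comap f) (B.comap f) := by
  have := h.1
  refine ⟨h.1.comap f, h.2.1.comap f, Subgroup.comap_mono h.2.2.1, ?_⟩
  obtain ⟨_, _, ⟨hb, ⟨b, rfl⟩⟩, h2⟩ := h.2.2.inf f.range
  refine ⟨b, hb, fun x hx => ?_⟩
  obtain ⟨k, hk⟩ := h2 (f x) ⟨hx, ⟨x, rfl⟩⟩
  refine ⟨k, ?_⟩
  simpa using hk.1

theorem Step.inf {G : Type*} [Group G] {A B : Subgroup G} (h : Step A B)
    (P : Subgroup G) [hP : P.Normal] : Step (A ⊓ P) (B ⊓ P) := by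
  have := h.1
  have := h.2.1
  exact ⟨inferInstance, inferInstance, h.2.2.inf P⟩

theorem Step.map {G H : Type*} [Group G] [Group H] (f : G →* H) (hf : Function.Surjective f)
    {A B : Subgroup G} (h : Step A B) : Step (A.map f) (B.map f) := by
  refine ⟨h.1.map f hf, h.2.1.map f hf, Subgroup.map_mono h.2.2.1, ?_⟩
  obtain ⟨_, b, hb, h2⟩ := h.2.2
  refine ⟨f b, ⟨b, hb, rfl⟩, ?_⟩
  rintro _ ⟨x, hx, rfl⟩
  obtain ⟨k, hk⟩ := h2 x hx
  exact ⟨k, ⟨_, hk, by simp⟩⟩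

theorem Ch.comap {G H : Type*} [Group G] [Group H] (f : H →* G) {A B : Subgroup G}
    (h : Ch A B) : Ch (A.comap f) (B.comap f) :=
  Relation.ReflTransGen.lift (Subgroup.comap f) (fun _ _ h => Step.comap f h) _ _ h

theorem Ch.map {G H : Type*} [Group G] [Group H] (f : G →* H) (hf : Function.Surjective f)
    {A B : Subgroup G} (h : Ch A B) : Ch (A.map f) (B.map f) :=
  Relation.ReflTransGen.lift (Subgroup.map f) (fun _ _ h => Step.map f hf h) _ _ h

theorem Ch.inf {G : Type*} [Group G] {A B : Subgroup G} (h : Ch A B)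
    (P : Subgroup G) [hP : P.Normal] : Ch (A ⊓ P) (B ⊓ P) :=
  Relation.ReflTransGen.lift (fun A => A ⊓ P) (fun _ _ h => Step.inf h P) _ _ h

theorem ch_of_quot {G : Type*} [Group G] (N : Subgroup G) [N.Normal]
    (h : IsSupersoluble (G ⧸ N)) : Ch N ⊤ := by
  have := ((ss_iff _).1 h).comap (QuotientGroup.mk' N)
  rwa [MonoidHom.comap_bot, QuotientGroup.ker_mk', Subgroup.comap_top] at this

theorem ss_subgroup {G : Type*} [Group G] (h : IsSupersoluble G) (K : Subgroup G) :
    IsSupersoluble K := by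
  rw [ss_iff] at *
  have := h.comap K.subtype
  simpa [MonoidHom.comap_bot] using this

theorem ss_quot {G : Type*} [Group G] (h : IsSupersoluble G) (N : Subgroup G) [N.Normal] :
    IsSupersoluble (G ⧸ N) := by
  rw [ss_iff] at *
  have := h.map (QuotientGroup.mk' N) (QuotientGroup.mk'_surjective N)
  simpa [Subgroup.map_top_of_surjective _ (QuotientGroup.mk'_surjective N)] using this

/-- all maximal subgroups have prime index -/
def MP (G : Type*) [Group G] : Prop := ∀ M : Subgroup G, IsCoatom M → M.index.Prime

theorem MP.quot {G : Type*} [Group G] (h : MP G) (N : Subgroup G) [N.Normal] : MP (G ⧸ N) := by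
  intro M hM
  have hs := QuotientGroup.mk'_surjective N
  have := h (M.comap (QuotientGroup.mk' N)) (Subgroup.isCoatom_comap_of_surjective hs hM)
  rwa [Subgroup.index_comap_of_surjective _ hs] at this

end KU

namespace KU

theorem exists_step {L : Type*} [Group L] (M : Subgroup L) {D T : Subgroup L}
    (hD : D ≤ M) (hT : ¬ T ≤ M) (h : Ch D T) :
    ∃ A B, Step A B ∧ A ≤ M ∧ ¬ B ≤ M := by
  have h' : Relation.ReflTransGen (Step (G := L)) D T := h
  induction h' with
  | refl => exact absurd hD hT
  | @tail B C hB hC ih =>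
    by_cases hBM : B ≤ M
    · exact ⟨B, C, hC, hBM, hT⟩
    · exact ih hBM hB

theorem index_eq_of {L : Type*} [Group L] [Finite L] (M B : Subgroup L)
    (e1 : B.relIndex M = B.index) : M.index = M.relIndex B := by
  have h1 := Subgroup.relIndex_inf_mul_relIndex M B ⊤
  have h2 := Subgroup.relIndex_inf_mul_relIndex B M ⊤
  simp only [inf_top_eq, Subgroup.relIndex_top_right] at h1 h2
  rw [inf_comm B M, ← h1, e1, mul_comm] at h2
  have : B.index ≠ 0 := Subgroup.index_ne_zero_of_finite
  refine Nat.eq_of_mul_eq_mul_left (Nat.pos_of_ne_zero this) ?_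
  rw [mul_comm, h2, mul_comm]

theorem prime_of_ch {L : Type*} [Group L] [Finite L] (M : Subgroup L) (hM : IsCoatom M)
    {D : Subgroup L} (hD : D ≤ M) (h : Ch D ⊤) : M.index.Prime := by
  obtain ⟨A, B, ⟨hA, hB, hAB, b, hb, hgen⟩, hAM, hBM⟩ :=
    exists_step M hD (fun h => hM.1 (top_le_iff.1 h)) h
  have hgen' : ∀ x ∈ B, ∃ a ∈ A, ∃ k : ℤ, x = a * b ^ k := fun x hx => by
    obtain ⟨k, hk⟩ := hgen x hx
    exact ⟨_, hk, -k, by group⟩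
  have hsup : M ⊔ B = ⊤ := hM.2 _ (left_lt_sup.2 hBM)
  have hcomm : ∀ x ∈ B, ∀ y ∈ B, x * y * x⁻¹ * y⁻¹ ∈ A := by
    intro x hx y hy
    obtain ⟨a, ha, k, rfl⟩ := hgen' x hx
    obtain ⟨c, hc, l, rfl⟩ := hgen' y hy
    rw [← QuotientGroup.eq_one_iff]
    have h1 : ((a : L) : L ⧸ A) = 1 := (QuotientGroup.eq_one_iff _).2 ha
    have h2 : ((c : L) : L ⧸ A) = 1 := (QuotientGroup.eq_one_iff _).2 hc
    simp only [QuotientGroup.mk_mul, QuotientGroup.mk_inv, QuotientGroup.mk_zpow, h1, h2, one_mul]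
    rw [mul_assoc, ← mul_inv_rev, ← zpow_add, ← zpow_add, add_comm, mul_inv_cancel]
  have hN : (M.subgroupOf B).Normal := by
    refine ⟨fun x hx g => ?_⟩
    have h1 := hAM (hcomm g g.2 x x.2)
    have h2 := M.mul_mem h1 hx
    simpa [Subgroup.mem_subgroupOf] using h2
  have hidx : M.index = M.relIndex B := by
    have e1 : B.relIndex M = B.index := by
      rw [← Subgroup.relIndex_sup_right, hsup, Subgroup.relIndex_top_right]
    exact index_eq_of M B e1
  let bq : ↥B ⧸ M.subgroupOf B := QuotientGroup.mk ⟨b, hb⟩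
  have hord : orderOf bq = M.index := by
    rw [hidx]
    apply orderOf_eq_card_of_forall_mem_zpowers
    intro x
    induction x using QuotientGroup.induction_on with
    | H x =>
      obtain ⟨a, ha, k, hk⟩ := hgen' x x.2
      refine ⟨k, ?_⟩
      change (QuotientGroup.mk _ : ↥B ⧸ (M.subgroupOf B)) ^ k = _
      symm
      rw [← QuotientGroup.mk_zpow, ← div_eq_one, ← QuotientGroup.mk_div, QuotientGroup.eq_one_iff,
        Subgroup.mem_subgroupOf]
      have : ((x / ⟨b, hb⟩ ^ k : ↥B) : L) = a := by
        simp [hk, div_eq_mul_inv]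
      rw [this]; exact hAM ha
  have hn1 : M.index ≠ 1 := fun h => hM.1 (Subgroup.index_eq_one.1 h)
  set q := M.index.minFac with hq
  have hqp : q.Prime := Nat.minFac_prime hn1
  have hqn : q ∣ M.index := Nat.minFac_dvd _
  have hE : (A ⊔ Subgroup.zpowers (b ^ q)).Normal := by
    refine ⟨fun x hx g => ?_⟩
    rw [← SetLike.mem_coe, Subgroup.normal_mul] at hx
    obtain ⟨a, ha, _, ⟨j, rfl⟩, rfl⟩ := hx
    obtain ⟨c, hc, k, hk⟩ := hgen' _ (hB.conj_mem b hb g)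
    have e : g * (a * (b ^ q) ^ j) * g⁻¹ = (g * a * g⁻¹) * ((g * b * g⁻¹) ^ q) ^ j := by
      rw [conj_pow, conj_zpow]; simp only [mul_assoc, inv_mul_cancel_left]
    simp only
    rw [e]
    refine mul_mem (Subgroup.mem_sup_left (hA.conj_mem a ha g)) (zpow_mem ?_ j)
    rw [hk]
    have : ((c * b ^ k) ^ q) * ((b ^ q) ^ k)⁻¹ ∈ A := by
      rw [← QuotientGroup.eq_one_iff]
      have h2 : ((c : L) : L ⧸ A) = 1 := (QuotientGroup.eq_one_iff _).2 hc
      simp only [QuotientGroup.mk_mul, QuotientGroup.mk_inv, QuotientGroup.mk_zpow,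
        QuotientGroup.mk_pow, h2, one_mul]
      rw [← zpow_natCast, ← zpow_natCast, ← zpow_mul, ← zpow_mul, mul_comm, mul_inv_cancel]
    have h3 := mul_mem (Subgroup.mem_sup_left (T := Subgroup.zpowers (b ^ q)) this)
      (Subgroup.mem_sup_right (S := A) (zpow_mem (Subgroup.mem_zpowers (b ^ q)) k))
    simpa using h3
  by_cases hle : (A ⊔ Subgroup.zpowers (b ^ q)) ≤ M
  · have h1 : b ^ q ∈ M := hle (Subgroup.mem_sup_right (Subgroup.mem_zpowers _))
    have h2 : bq ^ q = 1 := by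
      rw [← QuotientGroup.mk_pow, QuotientGroup.eq_one_iff, Subgroup.mem_subgroupOf]
      exact h1
    have h3 := orderOf_dvd_of_pow_eq_one h2
    rw [hord] at h3
    have : M.index = q := Nat.dvd_antisymm h3 hqn
    rw [this]; exact hqp
  · exfalso
    have hs : M ⊔ (A ⊔ Subgroup.zpowers (b ^ q)) = ⊤ := hM.2 _ (left_lt_sup.2 hle)
    have hbt : b ∈ (A ⊔ Subgroup.zpowers (b ^ q)) ⊔ M := by rw [sup_comm, hs]; trivial
    rw [← SetLike.mem_coe, Subgroup.normal_mul] at hbt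
    obtain ⟨e, he, m, hm, hem⟩ := hbt
    rw [Subgroup.normal_mul] at he
    obtain ⟨a, ha, _, ⟨j, rfl⟩, rfl⟩ := he
    simp only at hem
    have haB := hAB ha
    have hmB : m ∈ B := by
      have : m = (a * (b ^ q) ^ j)⁻¹ * b := eq_inv_mul_of_mul_eq hem
      rw [this]
      exact mul_mem (inv_mem (mul_mem haB (zpow_mem (pow_mem hb _) _))) hb
    have h1 : bq = (bq ^ q) ^ j := by
      have : (⟨b, hb⟩ : B) = ⟨a, haB⟩ * (⟨b, hb⟩ ^ q) ^ j * ⟨m, hmB⟩ := by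
        ext; simpa using hem.symm
      have h2 := congrArg (QuotientGroup.mk' (M.subgroupOf B)) this
      rw [map_mul, map_mul, map_zpow, map_pow] at h2
      have h3 : QuotientGroup.mk' (M.subgroupOf B) ⟨a, haB⟩ = 1 :=
        (QuotientGroup.eq_one_iff _).2 (by simpa [Subgroup.mem_subgroupOf] using hAM ha)
      have h4 : QuotientGroup.mk' (M.subgroupOf B) ⟨m, hmB⟩ = 1 :=
        (QuotientGroup.eq_one_iff _).2 (by simpa [Subgroup.mem_subgroupOf] using hm)
      rw [h3, h4, one_mul, mul_one] at h2
      exact h2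
    have h2 : bq ^ ((q : ℤ) * j - 1) = 1 := by
      rw [zpow_sub, zpow_mul, zpow_natCast, ← h1]; simp
    have h3 := orderOf_dvd_iff_zpow_eq_one.2 h2
    rw [hord] at h3
    have h4 : (q : ℤ) ∣ (q : ℤ) * j - 1 := (Int.natCast_dvd_natCast.2 hqn).trans h3
    have h5 : (q : ℤ) ∣ 1 := by
      have := dvd_sub (Dvd.intro j rfl : (q : ℤ) ∣ q * j) h4
      simpa using this
    exact hqp.one_lt.ne' (by exact_mod_cast Int.eq_one_of_dvd_one (by positivity) h5)

/-- one step of the chain -/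
def KStep {G : Type*} [Group G] (A B : Subgroup G) : Prop :=
  A ≤ B ∧ ((A.subgroupOf B).Normal ∨ IsSupersoluble (↥B ⧸ (A.subgroupOf B).normalCore))

theorem ku_iff {G : Type*} [Group G] (H K : Subgroup G) :
    IsKUSubnormalIn H K ↔ Relation.ReflTransGen KStep H K := by
  constructor
  · rintro ⟨n, c, rfl, rfl, h⟩
    exact chain_of_fin KStep n c h
  · intro h
    exact fin_of_chain _ h

theorem exists_kstep {G : Type*} [Group G] (L M : Subgroup G) {T : Subgroup G}
    (hT : ¬ T ⊓ L ≤ M) (h : Relation.ReflTransGen KStep M T) :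
    ∃ A B, KStep A B ∧ M ≤ A ∧ A ⊓ L ≤ M ∧ ¬ B ⊓ L ≤ M := by
  have key : ∀ {B}, Relation.ReflTransGen KStep M B → M ≤ B := by
    intro B hB
    induction hB with
    | refl => exact le_rfl
    | tail _ h ih => exact ih.trans h.1
  induction h with
  | refl => exact absurd inf_le_left hT
  | @tail B C hB hC ih =>
    by_cases hBM : B ⊓ L ≤ M
    · exact ⟨B, C, hC, key hB, hBM, hT⟩
    · exact ih hBM

theorem prime_of_ku {G : Type*} [Group G] [Finite G] (L : Subgroup G) (M : Subgroup L)
    (hM : IsCoatom M) (h : IsKUSubnormal (M.map L.subtype)) : M.index.Prime := by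
  have hML : M.map L.subtype ≤ L := Subgroup.map_subtype_le M
  obtain ⟨A, B, hAB, hMA, hAL, hBL⟩ := exists_kstep L (M.map L.subtype) (T := ⊤)
    (fun hh => hM.1 (by
      rw [top_inf_eq] at hh
      rw [eq_top_iff]; intro x _
      obtain ⟨y, hy, hyx⟩ := hh x.2
      rwa [← Subtype.ext hyx])) ((ku_iff _ _).1 h)
  have hAM : A.subgroupOf L = M := by
    ext x; constructor
    · intro hx
      obtain ⟨y, hy, hyx⟩ := hAL ⟨hx, x.2⟩
      rwa [← Subtype.ext hyx]
    · intro hx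
      exact hMA ⟨x, hx, rfl⟩
  have hLB : L ≤ B := by
    have : M < B.subgroupOf L := by
      refine lt_of_le_of_ne ?_ ?_
      · rw [← hAM]; exact Subgroup.comap_mono hAB.1
      · intro he
        apply hBL
        rintro x ⟨hx, hxL⟩
        refine ⟨⟨x, hxL⟩, ?_, rfl⟩
        change _ ∈ M
        rw [he]; exact hx
    have := hM.2 _ this
    rwa [Subgroup.subgroupOf_eq_top] at this
  have hcA : (A.subgroupOf B).comap (Subgroup.inclusion hLB) = M := by
    rw [← hAM]; rfl
  rcases hAB.2 with hn | hs
  · have hMn : M.Normal := by rw [← hcA]; infer_instance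
    obtain ⟨b, hb⟩ : ∃ b, b ∉ M := by
      by_contra! hc
      exact hM.1 ((Subgroup.eq_top_iff' _).2 hc)
    have hbt : M ⊔ Subgroup.zpowers b = ⊤ := hM.2 _ (left_lt_sup.2 (fun hc => hb (hc
      (Subgroup.mem_zpowers b))))
    refine prime_of_ch M hM le_rfl (Relation.ReflTransGen.single ⟨hMn, inferInstance, le_top, b,
      trivial, fun x _ => ?_⟩)
    have hx : x ∈ M ⊔ Subgroup.zpowers b := by rw [hbt]; trivial
    rw [← SetLike.mem_coe, Subgroup.normal_mul] at hx
    obtain ⟨m, hm, _, ⟨j, rfl⟩, rfl⟩ := hx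
    exact ⟨-j, by simpa using hm⟩
  · have h1 := (ch_of_quot _ hs).comap (Subgroup.inclusion hLB)
    refine prime_of_ch M hM ?_ h1
    rw [← hcA]
    exact Subgroup.comap_mono (Subgroup.normalCore_le _)

theorem main_of {G : Type*} [Group G] [Finite G]
    (huppert : ∀ L : Subgroup G, MP L → IsSupersoluble L) (n : ℕ)
    (h : ∀ H : Subgroup G, IsNMaximal (n + 1) H → IsKUSubnormal H) :
    ∀ H : Subgroup G, IsNMaximal (n + 2) H → IsKUSubnormal H := by
  rintro H ⟨K, hK, hHK⟩
  have hKG := h K hK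
  obtain ⟨L, hL, hKL⟩ := hK
  have hMP : MP L := by
    intro M hM
    refine prime_of_ku L M hM (h _ ⟨L, hL, Subgroup.map_subtype_le M, ?_⟩)
    have : (M.map L.subtype).subgroupOf L = M :=
      Subgroup.comap_map_eq_self_of_injective L.subtype_injective M
    rwa [this]
  have hLs := huppert L hMP
  have hKs : IsSupersoluble K := by
    rw [ss_iff] at hLs ⊢
    have := hLs.comap (Subgroup.inclusion hKL.1)
    have e : Subgroup.comap (Subgroup.inclusion hKL.1) ⊥ = ⊥ := by
      rw [MonoidHom.comap_bot, MonoidHom.ker_eq_bot_iff]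
      exact Subgroup.inclusion_injective _
    rwa [e, Subgroup.comap_top] at this
  unfold IsKUSubnormal at *
  rw [ku_iff] at *
  exact Relation.ReflTransGen.head ⟨hHK.1, Or.inr (ss_quot hKs _)⟩ hKG

end KU

namespace KU

theorem sylow_normal {G : Type*} [Group G] [Finite G] (hG : MP G) (p : ℕ) [hp : Fact p.Prime]
    (hmax : ∀ q : ℕ, q.Prime → q ∣ Nat.card G → q ≤ p) (P : Sylow p G) : (P : Subgroup G).Normal := by
  rw [← Subgroup.normalizer_eq_top_iff]
  by_contra hne
  obtain ⟨M, hM, hPM⟩ := (eq_top_or_exists_le_coatom (normalizer ((P : Subgroup G) : Set G))).resolve_left hne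
  have hle : (P : Subgroup G) ≤ M := Subgroup.le_normalizer.trans hPM
  have h1 := card_sylow_modEq_one p G
  have h2 := card_sylow_modEq_one p M
  rw [P.card_eq_index_normalizer] at h1
  rw [(P.subtype hle).card_eq_index_normalizer] at h2
  have h3 : (normalizer ((P.subtype hle : Subgroup M) : Set M)) =
      (normalizer ((P : Subgroup G) : Set G)).subgroupOf M := by
    rw [Sylow.coe_subtype, Subgroup.subgroupOf_normalizer_eq hle]
  have h2' : ((normalizer ((P : Subgroup G) : Set G)).relIndex M) ≡ 1 [MOD p] := by
    rw [Subgroup.relIndex, ← h3]; exact h2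
  have h4 := Subgroup.relIndex_mul_index hPM
  have h1' : (normalizer ((P : Subgroup G) : Set G)).index ≡ 1 [MOD p] := h1
  rw [← h4] at h1'
  have h5 : M.index ≡ 1 [MOD p] := by
    have := (h2'.mul_right M.index).symm.trans h1'
    simpa using this
  have hq := hG M hM
  have h6 := hmax _ hq (Subgroup.index_dvd_card M)
  have h7 := (Nat.modEq_iff_dvd' hq.one_lt.le).1 h5.symm
  have h8 := Nat.le_of_dvd (by have := hq.one_lt; omega) h7
  have := hq.one_lt
  omega

theorem prime_card_of_compl {G : Type*} [Group G] [Finite G] (hG : MP G) {N : Subgroup G}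
    (hN : IsMinimalNormal N) (hab : ∀ x ∈ N, ∀ y ∈ N, x * y = y * x) (M : Subgroup G)
    (hM : IsCoatom M) (hNM : ¬ N ≤ M) : (Nat.card N).Prime := by
  have hNn := hN.1
  have hsup : N ⊔ M = ⊤ := hM.2 _ (right_lt_sup.2 hNM)
  have hnorm : (N ⊓ M).Normal := by
    refine ⟨fun x hx g => ⟨hNn.conj_mem x hx.1 g, ?_⟩⟩
    have hg : g ∈ M ⊔ N := by rw [sup_comm, hsup]; trivial
    rw [← SetLike.mem_coe, Subgroup.mul_normal] at hg
    obtain ⟨m, hm, n, hn, rfl⟩ := hg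
    have e : m * n * x * (m * n)⁻¹ = m * x * m⁻¹ := by
      have := hab n hn x hx.1
      calc m * n * x * (m * n)⁻¹ = m * (n * x) * n⁻¹ * m⁻¹ := by group
        _ = _ := by rw [this]; group
    change m * n * x * (m * n)⁻¹ ∈ M
    rw [e]
    exact M.mul_mem (M.mul_mem hm hx.2) (M.inv_mem hm)
  have hbot : N ⊓ M = ⊥ := by
    by_contra hne
    have := hN.2.2 _ hnorm inf_le_left hne
    exact hNM (inf_eq_left.1 this)
  have e1 : N.relIndex M = N.index := by
    rw [← Subgroup.relIndex_sup_left, hsup, Subgroup.relIndex_top_right]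
  have e2 := index_eq_of M N e1
  rw [← Subgroup.inf_relIndex_right, inf_comm, hbot, Subgroup.relIndex_bot_left] at e2
  rw [← e2]; exact hG M hM

theorem retract {V : Type*} [CommGroup V] (p : ℕ) [Fact p.Prime] (hp : ∀ x : V, x ^ p = 1)
    (N : Subgroup V) : ∃ π : V →* V, (∀ x, π x ∈ N) ∧ ∀ x ∈ N, π x = x := by
  let _ : Module (ZMod p) (Additive V) := AddCommGroup.zmodModule (n := p) (fun x => hp x.toMul)
  let S : Submodule (ZMod p) (Additive V) := AddSubgroup.toZModSubmodule p (Subgroup.toAddSubgroup N)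
  obtain ⟨g, hg⟩ := S.subtype.exists_leftInverse_of_injective S.ker_subtype
  let f : Additive V →+ Additive V := (S.subtype.comp g).toAddMonoidHom
  refine ⟨AddMonoidHom.toMultiplicative f, fun x => ?_, fun x hx => ?_⟩
  · exact (g (Additive.ofMul x)).2
  · have := LinearMap.congr_fun hg ⟨Additive.ofMul x, hx⟩
    exact congrArg (fun y : S => (y : Additive V).toMul) this

theorem maschke {V Q : Type*} [CommGroup V] [Group Q] [Finite Q] (p : ℕ) [hpp : Fact p.Prime]
    (hp : ∀ x : V, x ^ p = 1) (hQ : (Nat.card Q).Coprime p) (φ : Q →* MulAut V) (N : Subgroup V)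
    (hN : ∀ q, ∀ x ∈ N, φ q x ∈ N) :
    ∃ W : Subgroup V, (∀ q, ∀ x ∈ W, φ q x ∈ W) ∧ W ⊓ N = ⊥ ∧ W ⊔ N = ⊤ := by
  obtain ⟨π, h1, h2⟩ := retract p hp N
  have := Fintype.ofFinite Q
  let σ : V →* V := ∏ q : Q, ((φ q).toMonoidHom.comp π).comp (φ q⁻¹).toMonoidHom
  have hσ : ∀ x, σ x = ∏ q : Q, φ q (π (φ q⁻¹ x)) := fun x => by
    simp [σ, MonoidHom.finsetProd_apply]
  have hσN : ∀ x, σ x ∈ N := fun x => by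
    rw [hσ]; exact N.prod_mem fun q _ => hN _ _ (h1 _)
  have hσe : ∀ x ∈ N, σ x = x ^ Nat.card Q := fun x hx => by
    rw [hσ, Nat.card_eq_fintype_card]
    have : ∀ q : Q, φ q (π (φ q⁻¹ x)) = x := fun q => by
      rw [h2 _ (hN _ _ hx)]; simp
    rw [Finset.prod_congr rfl (fun q _ => this q)]; simp
  have hσφ : ∀ r x, σ (φ r x) = φ r (σ x) := fun r x => by
    rw [hσ, hσ, map_prod]
    refine Fintype.prod_equiv (Equiv.mulLeft r⁻¹) _ _ fun q => ?_
    simp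
  obtain ⟨k, hk⟩ : ∃ k : ℕ, ∀ x : V, (x ^ k) ^ Nat.card Q = x := by
    obtain ⟨k, hk⟩ := Nat.exists_mul_mod_eq_one_of_coprime hQ hpp.1.one_lt
    refine ⟨k, fun x => ?_⟩
    rw [← pow_mul, mul_comm, pow_eq_pow_mod _ (hp x), hk.2, pow_one]
  refine ⟨σ.ker, fun q x hx => ?_, ?_, ?_⟩
  · rw [MonoidHom.mem_ker] at *
    rw [hσφ, hx, map_one]
  · rw [eq_bot_iff]
    rintro x ⟨hx, hxN⟩
    have h3 : σ x = 1 := hx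
    rw [hσe x hxN] at h3
    have h4 := hk x
    rw [← pow_mul, mul_comm, pow_mul, h3, one_pow] at h4
    exact h4.symm
  · rw [eq_top_iff]
    intro x _
    have h3 : σ x ^ k ∈ N := N.pow_mem (hσN x) k
    have h4 : x * (σ x ^ k)⁻¹ ∈ σ.ker := by
      rw [MonoidHom.mem_ker, map_mul, map_inv, hσe _ h3, hk, mul_inv_cancel]
    have := mul_mem (Subgroup.mem_sup_left (T := N) h4) (Subgroup.mem_sup_right (S := σ.ker) h3)
    simpa using this

theorem abelian_case {G : Type*} [Group G] [Finite G] (hG : MP G) (p : ℕ) [hp : Fact p.Prime]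
    (P : Sylow p G) (hPn : (P : Subgroup G).Normal)
    (hab : ∀ x ∈ P, ∀ y ∈ P, x * y = y * x) (hpow : ∀ x ∈ P, x ^ p = 1)
    {N : Subgroup G} (hN : IsMinimalNormal N) (hNP : N ≤ P) : (Nat.card N).Prime := by
  obtain ⟨Q, hQ⟩ := Subgroup.exists_right_complement'_of_coprime (P.card_coprime_index)
  let _ : CommGroup (P : Subgroup G) :=
    { (inferInstance : Group (P : Subgroup G)) with
      mul_comm := fun a b => Subtype.ext (hab a a.2 b b.2) }
  have hNn := hN.1
  have hQp : (Nat.card Q).Coprime p := by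
    rw [← hQ.symm.index_eq_card]
    exact ((Nat.Prime.coprime_iff_not_dvd hp.1).2 P.not_dvd_index).symm
  let φ : Q →* MulAut (P : Subgroup G) := (MulAut.conjNormal (H := (P : Subgroup G))).comp Q.subtype
  obtain ⟨W, hW1, hW2, hW3⟩ := maschke p (fun x : (P : Subgroup G) => Subtype.ext (hpow x x.2)) hQp φ
    (N.subgroupOf P) (fun q x hx => hNn.conj_mem _ hx q)
  have hsup : (P : Subgroup G) ⊔ Q = ⊤ := hQ.sup_eq_top
  let W' := W.map (P : Subgroup G).subtype
  have hW'n : W'.Normal := by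
    refine ⟨?_⟩
    rintro _ ⟨w, hw, rfl⟩ g
    have hg : g ∈ Q ⊔ (P : Subgroup G) := by rw [sup_comm, hsup]; trivial
    rw [← SetLike.mem_coe, Subgroup.mul_normal] at hg
    obtain ⟨q, hq, x, hx, rfl⟩ := hg
    refine ⟨φ ⟨q, hq⟩ w, hW1 _ _ hw, ?_⟩
    change q * w * q⁻¹ = q * x * w * (q * x)⁻¹
    have := hab x hx w w.2
    calc q * (w : G) * q⁻¹ = q * (w * x) * x⁻¹ * q⁻¹ := by group
      _ = _ := by rw [← this]; group
  have hNM : N ⊓ (W' ⊔ Q) = ⊥ := by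
    rw [eq_bot_iff]
    rintro x ⟨hxN, hx⟩
    replace hx : x ∈ ((W' ⊔ Q : Subgroup G) : Set G) := hx
    rw [Subgroup.normal_mul] at hx
    obtain ⟨_, ⟨w, hw, rfl⟩, q, hq, rfl⟩ := hx
    have hqP : q ∈ (P : Subgroup G) := by
      have := mul_mem (inv_mem w.2) (hNP hxN)
      simpa using this
    have hq1 : q = 1 := by
      have := hQ.disjoint.le_bot (⟨hqP, hq⟩ : q ∈ (P : Subgroup G) ⊓ Q)
      simpa using this
    subst hq1
    have hw2 : w ∈ W ⊓ N.subgroupOf P := ⟨hw, by simpa [Subgroup.mem_subgroupOf] using hxN⟩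
    rw [hW2] at hw2
    have : w = 1 := by simpa using hw2
    simp [this]
  have hall : (W' ⊔ Q) ⊔ N = ⊤ := by
    rw [eq_top_iff, ← hsup]
    refine sup_le ?_ (le_sup_right.trans le_sup_left)
    intro x hx
    have h5 : (⟨x, hx⟩ : (P : Subgroup G)) ∈ W ⊔ N.subgroupOf P := by rw [hW3]; trivial
    have h6 : (W ⊔ N.subgroupOf P).map (P : Subgroup G).subtype ≤ (W' ⊔ Q) ⊔ N := by
      rw [Subgroup.map_sup]
      refine sup_le (le_sup_left.trans le_sup_left) (le_trans ?_ le_sup_right)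
      rintro _ ⟨y, hy, rfl⟩
      exact hy
    exact h6 ⟨_, h5, rfl⟩
  have hne : W' ⊔ Q ≠ ⊤ := by
    intro h
    rw [h, inf_top_eq] at hNM
    exact hN.2.1 hNM
  obtain ⟨M, hM, hle⟩ := (eq_top_or_exists_le_coatom (W' ⊔ Q)).resolve_left hne
  refine prime_card_of_compl hG hN (fun x hx y hy => hab x (hNP hx) y (hNP hy)) M hM fun hNM' => ?_
  exact hM.1 (top_le_iff.1 (hall ▸ sup_le hle hNM'))

open Polynomial in
theorem eigen {V : Type*} [CommGroup V] [Finite V] [Nontrivial V] (p : ℕ) [hpp : Fact p.Prime]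
    (hp : ∀ x : V, x ^ p = 1) (T : V →* V) (k : ℕ)
    (hT : ∀ x, (T^[p ^ k * (p - 1)]) x = x) : ∃ v : V, v ≠ 1 ∧ ∃ a : ℕ, T v = v ^ a := by
  let _ : Module (ZMod p) (Additive V) := AddCommGroup.zmodModule (n := p) (fun x => hp x.toMul)
  let f : Module.End (ZMod p) (Additive V) := (MonoidHom.toAdditive T).toZModLinearMap p
  have hf : aeval f ((X ^ (p - 1) - 1 : (ZMod p)[X]) ^ (p ^ k)) = 0 := by
    have e : ((X ^ (p - 1) - 1 : (ZMod p)[X]) ^ (p ^ k)) = X ^ (p ^ k * (p - 1)) - 1 := by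
      rw [sub_pow_char_pow, one_pow, ← pow_mul, mul_comm]
    rw [e, map_sub, map_pow, aeval_X, map_one, sub_eq_zero]
    ext x
    rw [Module.End.pow_apply]
    exact hT x.toMul
  have hspl : ((X ^ (p - 1) - 1 : (ZMod p)[X]) ^ (p ^ k)).Splits := by
    apply Polynomial.Splits.pow
    have h1 := FiniteField.splits_X_pow_card_sub_X (K := ZMod p) p
    rw [ZMod.card, Algebra.algebraMap_self, Polynomial.map_id] at h1
    refine h1.of_dvd ?_ ⟨X, ?_⟩
    · exact FiniteField.X_pow_card_sub_X_ne_zero (ZMod p) hpp.1.one_lt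
    · rw [sub_mul, one_mul, ← pow_succ, Nat.sub_add_cancel hpp.1.one_lt.le]
  have hmin := minpoly.dvd (ZMod p) f hf
  have hne : ((X ^ (p - 1) - 1 : (ZMod p)[X]) ^ (p ^ k)) ≠ 0 := by
    apply pow_ne_zero
    exact X_pow_sub_C_ne_zero (Nat.sub_pos_of_lt hpp.1.one_lt) (1 : ZMod p)
  have hms := hspl.of_dvd hne hmin
  obtain ⟨a, ha⟩ := hms.exists_eval_eq_zero 
    (minpoly.degree_pos (Algebra.IsIntegral.isIntegral f)).ne'
  have hev := Module.End.hasEigenvalue_of_isRoot (f := f) ha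
  obtain ⟨v, hv⟩ := hev.exists_hasEigenvector
  refine ⟨v.toMul, fun h => hv.2 h, a.val, ?_⟩
  have h1 := hv.apply_eq_smul
  have h2 : (a.val : ZMod p) • v = a.val • v := Nat.cast_smul_eq_nsmul _ _ _
  rw [ZMod.natCast_zmod_val] at h2
  rw [h2] at h1
  exact h1

end KU

namespace KU

open scoped commutatorElement

theorem step_good {G : Type*} [Group G] [Finite G] {A B P : Subgroup G} (h : Step A B)
    (hBP : B ≤ P) :
    (∀ g k : G, ∀ x ∈ B, ⁅g, k⁆ * x * ⁅g, k⁆⁻¹ * x⁻¹ ∈ A) ∧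
    (∀ g : G, ∀ x ∈ B, (g ^ (Nat.card P).totient) * x * (g ^ (Nat.card P).totient)⁻¹ * x⁻¹ ∈ A) := by
  obtain ⟨hA, hB, hAB, b, hb, hgen⟩ := h
  have hBn : (B.map (QuotientGroup.mk' A)).Normal := hB.map _ (QuotientGroup.mk'_surjective A)
  let f : G →* MulAut (B.map (QuotientGroup.mk' A)) :=
    (MulAut.conjNormal (H := B.map (QuotientGroup.mk' A))).comp (QuotientGroup.mk' A)
  have key : ∀ r : G, f r = 1 → ∀ x ∈ B, r * x * r⁻¹ * x⁻¹ ∈ A := by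
    intro r hr x hx
    have h1 := DFunLike.congr_fun hr ⟨QuotientGroup.mk' A x, ⟨x, hx, rfl⟩⟩
    have h2 := congrArg Subtype.val h1
    have h3 : (QuotientGroup.mk' A r) * (QuotientGroup.mk' A x) * (QuotientGroup.mk' A r)⁻¹ =
      QuotientGroup.mk' A x := h2
    rw [← QuotientGroup.ker_mk' A, MonoidHom.mem_ker, map_mul, map_mul, map_mul, map_inv, h3,
      map_inv, mul_inv_cancel]
  have hcyc : IsCyclic (B.map (QuotientGroup.mk' A)) := by
    refine ⟨⟨QuotientGroup.mk' A b, ⟨b, hb, rfl⟩⟩, ?_⟩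
    rintro ⟨_, ⟨x, hx, rfl⟩⟩
    obtain ⟨k, hk⟩ := hgen x hx
    refine ⟨-k, Subtype.ext ?_⟩
    change (QuotientGroup.mk' A b) ^ (-k) = QuotientGroup.mk' A x
    rw [← QuotientGroup.ker_mk' A, MonoidHom.mem_ker, map_mul, map_zpow] at hk
    rw [zpow_neg]
    exact (eq_inv_of_mul_eq_one_left hk).symm
  refine ⟨fun g k => key _ ?_, fun g => key _ ?_⟩
  · rw [map_commutatorElement]
    apply (IsCyclic.mulAutMulEquiv (B.map (QuotientGroup.mk' A))).injective
    rw [map_commutatorElement, map_one, commutatorElement_eq_one_iff_mul_comm, mul_comm]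
  · have hc := IsCyclic.card_mulAut (B.map (QuotientGroup.mk' A))
    have hd : Nat.card (B.map (QuotientGroup.mk' A)) ∣ Nat.card P :=
      (Subgroup.card_map_dvd B _).trans (Subgroup.card_dvd_of_le hBP)
    obtain ⟨c, hc'⟩ := Nat.totient_dvd_of_dvd hd
    rw [map_pow, hc', ← hc, pow_mul, pow_card_eq_one', one_pow]

/-- elements acting trivially on all cyclic steps below `P` -/
def RR {G : Type*} [Group G] (P : Subgroup G) : Subgroup G where
  carrier := {r | ∀ A B : Subgroup G, Step A B → B ≤ P → ∀ x ∈ B, r * x * r⁻¹ * x⁻¹ ∈ A}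
  one_mem' := fun A B _ _ x _ => by simp [A.one_mem]
  mul_mem' := fun {r s} hr hs A B h hB x hx => by
    have h1 := h.1.conj_mem _ (hs A B h hB x hx) r
    have h2 := hr A B h hB x hx
    have := A.mul_mem h1 h2
    have e : r * (s * x * s⁻¹ * x⁻¹) * r⁻¹ * (r * x * r⁻¹ * x⁻¹) = r * s * x * (r * s)⁻¹ * x⁻¹ := by
      group
    rwa [e] at this
  inv_mem' := fun {r} hr A B h hB x hx => by
    have h1 := h.1.conj_mem _ (A.inv_mem (hr A B h hB x hx)) r⁻¹
    have e : r⁻¹ * (r * x * r⁻¹ * x⁻¹)⁻¹ * r⁻¹⁻¹ = r⁻¹ * x * r⁻¹⁻¹ * x⁻¹ := by group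
    rwa [e] at h1

theorem fixed_coset {G : Type*} [Group G] [Finite G] (p q : ℕ) [hp : Fact p.Prime]
    [hq : Fact q.Prime] (hpq : p ≠ q) {A : Subgroup G} [hA : A.Normal] (hAp : IsPGroup p A)
    (Q : Subgroup G) (hQ : IsPGroup q Q) (x : G) (hx : ∀ r ∈ Q, r * x * r⁻¹ * x⁻¹ ∈ A) :
    ∃ y, y * x⁻¹ ∈ A ∧ ∀ r ∈ Q, r * y * r⁻¹ = y := by
  let S := {y : G // y * x⁻¹ ∈ A}
  let _ : MulAction Q S :=
    { smul := fun r y => ⟨r * y.1 * (r : G)⁻¹, by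
        have h1 := A.mul_mem (hA.conj_mem _ y.2 r) (hx r r.2)
        have e : (r : G) * (y.1 * x⁻¹) * (r : G)⁻¹ * (r * x * (r : G)⁻¹ * x⁻¹) =
          r * y.1 * (r : G)⁻¹ * x⁻¹ := by group
        rwa [e] at h1⟩
      one_smul := fun y => Subtype.ext (by
        change ((1 : Q) : G) * y.1 * ((1 : Q) : G)⁻¹ = y.1
        simp)
      mul_smul := fun r s y => Subtype.ext (by
        change ((r * s : Q) : G) * y.1 * ((r * s : Q) : G)⁻¹ = r * (s * y.1 * (s : G)⁻¹) * (r : G)⁻¹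
        simp [mul_assoc]) }
  have hcard : Nat.card S = Nat.card A :=
    Nat.card_congr
      { toFun := fun y => ⟨y.1 * x⁻¹, y.2⟩
        invFun := fun a => ⟨a.1 * x, by simp⟩
        left_inv := fun y => Subtype.ext (by simp)
        right_inv := fun y => Subtype.ext (by simp) }
  have hnd : ¬ q ∣ Nat.card S := by
    rw [hcard]
    obtain ⟨n, hn⟩ := IsPGroup.iff_card.1 hAp
    rw [hn]
    intro hd
    exact hpq ((Nat.prime_dvd_prime_iff_eq hq.1 hp.1).1 (hq.1.dvd_of_dvd_pow hd)).symm
  obtain ⟨y, hy⟩ := hQ.nonempty_fixed_point_of_prime_not_dvd_card S hnd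
  exact ⟨y.1, y.2, fun r hr => congrArg Subtype.val (hy ⟨r, hr⟩)⟩

theorem chain_cover {G : Type*} [Group G] [Finite G] (p q : ℕ) [hp : Fact p.Prime]
    [hq : Fact q.Prime] (hpq : p ≠ q) {P N : Subgroup G} (hP : IsPGroup p P)
    (Q : Subgroup G) (hQ : IsPGroup q Q) (hQR : Q ≤ RR P) {B : Subgroup G} (h : Ch N B)
    (hB : B ≤ P) : B ≤ (Subgroup.centralizer (Q : Set G) ⊓ P) ⊔ N := by
  have h' : Relation.ReflTransGen (Step (G := G)) N B := h
  clear h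
  induction h' with
  | refl => exact le_sup_right
  | @tail A B hA hAB ih =>
    have hAB' := hAB.2.2.1
    have ih := ih (hAB'.trans hB)
    have hAn := hAB.1
    intro x hx
    obtain ⟨y, hy, hyQ⟩ := fixed_coset p q hpq (A := A) (hP.to_le (hAB'.trans hB)) Q hQ x
      (fun r hr => hQR hr A B hAB hB x hx)
    have hyP : y ∈ P := by
      have := P.mul_mem (hB (hAB' hy)) (hB hx)
      simpa using this
    have hyc : y ∈ Subgroup.centralizer (Q : Set G) := by
      rw [Subgroup.mem_centralizer_iff]
      intro r hr
      exact mul_inv_eq_iff_eq_mul.1 (hyQ r hr)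
    have h1 : x = (y * x⁻¹)⁻¹ * y := by group
    rw [h1]
    exact mul_mem (inv_mem (ih hy)) (Subgroup.mem_sup_left ⟨hyc, hyP⟩)

theorem central_of_pgroup {G : Type*} [Group G] [Finite G] (p : ℕ) [hp : Fact p.Prime]
    {P N : Subgroup G} [hPn : P.Normal] (hP : IsPGroup p P) (hN : IsMinimalNormal N) (hNP : N ≤ P) :
    ∀ x ∈ P, ∀ y ∈ N, x * y = y * x := by
  have hNn := hN.1
  -- `P` acts on `N` by conjugation
  let φ : P →* MulAut N := (MulAut.conjNormal (H := N)).comp P.subtype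
  let _ : MulAction P N := MulAction.compHom N φ
  have hNt : Nontrivial N := (Subgroup.nontrivial_iff_ne_bot N).2 hN.2.1
  have hd : p ∣ Nat.card N := by
    rcases (hP.to_le hNP).card_eq_or_dvd with h | h
    · exact absurd h (Finite.one_lt_card).ne'
    · exact h
  obtain ⟨z, hz, hz1⟩ := hP.exists_fixed_point_of_prime_dvd_card_of_fixed_point N hd (a := 1)
    (fun g => map_one (φ g))
  have hzc : (z : G) ∈ Subgroup.centralizer (P : Set G) := by
    rw [Subgroup.mem_centralizer_iff]
    intro r hr
    have : r * z * r⁻¹ = z := congrArg Subtype.val (hz ⟨r, hr⟩)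
    exact mul_inv_eq_iff_eq_mul.1 this
  have hC : N ⊓ Subgroup.centralizer (P : Set G) = N := by
    refine hN.2.2 _ inferInstance inf_le_left fun h => hz1 ?_
    have : (z : G) ∈ N ⊓ Subgroup.centralizer (P : Set G) := ⟨z.2, hzc⟩
    rw [h] at this
    exact (Subtype.ext (by simpa using this)).symm
  intro x hx y hy
  rw [← hC] at hy
  exact Subgroup.mem_centralizer_iff.1 hy.2 x hx

theorem RR_centralizes {G : Type*} [Group G] [Finite G] (p : ℕ) [hp : Fact p.Prime]
    (P : Sylow p G) [hPn : (P : Subgroup G).Normal] {N : Subgroup G} (hN : IsMinimalNormal N)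
    (hNF : N ≤ (frattini (P : Subgroup G)).map (P : Subgroup G).subtype)
    (hch : Ch N ⊤) : RR (P : Subgroup G) ≤ Subgroup.centralizer (N : Set G) := by
  have hNP : N ≤ P := hNF.trans (Subgroup.map_subtype_le _)
  have hch' : Ch N P := by
    have := hch.inf (P : Subgroup G)
    rwa [inf_eq_left.2 hNP, top_inf_eq] at this
  have key : ∀ (q : ℕ) [Fact q.Prime] (Q : Subgroup G), IsPGroup q Q → Q ≤ RR (P : Subgroup G) →
      Q ≤ Subgroup.centralizer (N : Set G) := by
    intro q hq Q hQ hQR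
    by_cases hpq : p = q
    · subst hpq
      have hQP : Q ≤ P := by
        obtain ⟨Q', hQ'⟩ := hQ.exists_le_sylow
        have := P.unique_of_normal hPn
        rwa [Subsingleton.elim Q' P] at hQ'
      intro x hx
      rw [Subgroup.mem_centralizer_iff]
      intro y hy
      exact (central_of_pgroup p P.2 hN hNP x (hQP hx) y hy).symm
    · have h1 := chain_cover p q hpq P.2 Q hQ hQR hch' le_rfl
      have h2 : (Subgroup.centralizer (Q : Set G)).subgroupOf (P : Subgroup G) ⊔
          frattini (P : Subgroup G) = ⊤ := by
        apply Subgroup.map_injective (P : Subgroup G).subtype_injective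
        rw [Subgroup.map_sup, Subgroup.subgroupOf_map_subtype, ← MonoidHom.range_eq_map,
          Subgroup.range_subtype]
        refine le_antisymm (sup_le inf_le_right (Subgroup.map_subtype_le _)) ?_
        exact h1.trans (sup_le_sup_left hNF _)
      have h3 := frattini_nongenerating h2
      rw [Subgroup.subgroupOf_eq_top] at h3
      rw [Subgroup.le_centralizer_iff]
      exact hNP.trans h3
  rw [← Subgroup.relIndex_eq_one]
  by_contra hne
  obtain ⟨q, hq, hd⟩ := Nat.exists_prime_and_dvd hne
  have : Fact q.Prime := ⟨hq⟩
  obtain ⟨Q⟩ : Nonempty (Sylow q (RR (P : Subgroup G))) := inferInstance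
  have h1 := key q ((Q : Subgroup _).map (RR (P : Subgroup G)).subtype) (Q.2.map _)
    (Subgroup.map_subtype_le _)
  have h2 : (Q : Subgroup _) ≤ (Subgroup.centralizer (N : Set G)).subgroupOf (RR (P : Subgroup G)) :=
    fun x hx => h1 ⟨x, hx, rfl⟩
  exact Q.not_dvd_index (hd.trans (Subgroup.index_dvd_of_le h2))

theorem frattini_case {G : Type*} [Group G] [Finite G] (p : ℕ) [hp : Fact p.Prime]
    (P : Sylow p G) [hPn : (P : Subgroup G).Normal] {N : Subgroup G} (hN : IsMinimalNormal N)
    (hNF : N ≤ (frattini (P : Subgroup G)).map (P : Subgroup G).subtype)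
    (hch : Ch N ⊤) : ∃ v : G, N = Subgroup.zpowers v := by
  have hNP : N ≤ P := hNF.trans (Subgroup.map_subtype_le _)
  have hNn := hN.1
  have hNt : Nontrivial N := (Subgroup.nontrivial_iff_ne_bot N).2 hN.2.1
  have hcen := central_of_pgroup p P.2 hN hNP
  have hRR := RR_centralizes p P hN hNF hch
  have hcomm : ∀ g k : G, ∀ x ∈ N, ⁅g, k⁆ * x = x * ⁅g, k⁆ := fun g k x hx =>
    (Subgroup.mem_centralizer_iff.1 (hRR (show ⁅g, k⁆ ∈ RR (P : Subgroup G) from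
      fun A B h hB => (step_good h hB).1 g k)) x hx).symm
  have hpow : ∀ g : G, ∀ x ∈ N, g ^ (Nat.card P).totient * x = x * g ^ (Nat.card P).totient :=
    fun g x hx =>
    (Subgroup.mem_centralizer_iff.1 (hRR (show g ^ (Nat.card P).totient ∈ RR (P : Subgroup G) from
      fun A B h hB => (step_good h hB).2 g)) x hx).symm
  have hab : ∀ x ∈ N, ∀ y ∈ N, x * y = y * x := fun x hx => hcen x (hNP hx)
  let _ : CommGroup N :=
    { (inferInstance : Group N) with
      mul_comm := fun a b => Subtype.ext (hab a a.2 b b.2) }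
  -- `N` has exponent `p`
  have hexp : ∀ x : N, x ^ p = 1 := by
    let K : Subgroup G := 
      { carrier := {x | x ∈ N ∧ x ^ p = 1}
        one_mem' := ⟨N.one_mem, one_pow _⟩
        mul_mem' := fun {x y} hx hy => ⟨N.mul_mem hx.1 hy.1, by
          rw [(show Commute x y from hab x hx.1 y hy.1).mul_pow, hx.2, hy.2, one_mul]⟩
        inv_mem' := fun {x} hx => ⟨N.inv_mem hx.1, by rw [inv_pow, hx.2, inv_one]⟩ }
    have hK : K = N := by
      refine hN.2.2 K ⟨fun x hx g => ⟨hNn.conj_mem _ hx.1 g, by rw [conj_pow, hx.2]; simp⟩⟩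
        (fun x hx => hx.1) fun hbot => ?_
      have hd : p ∣ Nat.card N := by
        rcases (P.2.to_le hNP).card_eq_or_dvd with h | h
        · exact absurd h (Finite.one_lt_card).ne'
        · exact h
      obtain ⟨z, hz⟩ := exists_prime_orderOf_dvd_card' p hd
      have hzK : (z : G) ∈ K := ⟨z.2, by
        have := pow_orderOf_eq_one z
        rw [hz] at this
        exact congrArg Subtype.val this⟩
      rw [hbot] at hzK
      have : z = 1 := Subtype.ext (by simpa using hzK)
      rw [this, orderOf_one] at hz
      exact hp.1.one_lt.ne hz
    intro x
    have : (x : G) ∈ K := by rw [hK]; exact x.2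
    exact Subtype.ext this.2
  obtain ⟨a, ha⟩ := IsPGroup.iff_card.1 P.2
  have ha0 : 0 < a := by
    rcases Nat.eq_zero_or_pos a with h | h
    · exfalso
      rw [h, pow_zero] at ha
      have : (P : Subgroup G) = ⊥ := Subgroup.card_eq_one.1 ha
      exact hN.2.1 (le_bot_iff.1 (this ▸ hNP))
    · exact h
  have hscal : ∀ g : G, ∃ k : ℕ, ∀ x ∈ N, g * x * g⁻¹ = x ^ k := by
    intro g
    let T : N →* N := (MulAut.conjNormal (H := N) g).toMonoidHom
    have hTi : ∀ (n : ℕ) (x : N), ((T^[n] x : N) : G) = g ^ n * x * (g ^ n)⁻¹ := by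
      intro n
      induction n with
      | zero => intro x; simp
      | succ n ih =>
        intro x
        rw [Function.iterate_succ_apply', pow_succ']
        change g * ((T^[n] x : N) : G) * g⁻¹ = _
        rw [ih]; group
    obtain ⟨v, hv1, k, hk⟩ := eigen p hexp T (a - 1) (fun x => Subtype.ext (by
      rw [hTi]
      have := hpow g x x.2
      have ha' : Nat.card P = p ^ a := ha
      rw [ha', Nat.totient_prime_pow hp.1 ha0] at this
      rw [this]; simp))
    have hk' : g * v * g⁻¹ = (v : G) ^ k := congrArg Subtype.val hk
    let K : Subgroup G := 
      { carrier := {x | x ∈ N ∧ g * x * g⁻¹ = x ^ k}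
        one_mem' := ⟨N.one_mem, by simp⟩
        mul_mem' := fun {x y} hx hy => ⟨N.mul_mem hx.1 hy.1, by
          rw [(show Commute x y from hab x hx.1 y hy.1).mul_pow, ← hx.2, ← hy.2]; group⟩
        inv_mem' := fun {x} hx => ⟨N.inv_mem hx.1, by rw [inv_pow, ← hx.2]; group⟩ }
    have hK : K = N := by
      refine hN.2.2 K ⟨fun x hx h => ⟨hNn.conj_mem _ hx.1 h, ?_⟩⟩
        (fun x hx => hx.1) fun hbot => ?_
      · rw [conj_pow, ← hx.2]
        have e : g * (h * x * h⁻¹) * g⁻¹ =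
          h * g * (⁅g⁻¹, h⁻¹⁆ * x * ⁅g⁻¹, h⁻¹⁆⁻¹) * g⁻¹ * h⁻¹ := by
          simp only [commutatorElement_def]; group
        rw [e, hcomm _ _ _ hx.1]; group
      · have hvK : (v : G) ∈ K := ⟨v.2, hk'⟩
        rw [hbot] at hvK
        exact hv1 (Subtype.ext (by simpa using hvK))
    refine ⟨k, fun x hx => ?_⟩
    rw [← hK] at hx
    exact hx.2
  obtain ⟨v, hv⟩ := exists_ne (1 : N)
  refine ⟨v, (hN.2.2 _ ⟨fun x hx g => ?_⟩ ?_ ?_).symm⟩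
  · have hle : Subgroup.zpowers (v : G) ≤ N := by simp
    obtain ⟨k, hk⟩ := hscal g
    rw [hk x (hle hx)]
    exact pow_mem hx k
  · simp
  · rw [Ne, Subgroup.zpowers_eq_bot]
    exact fun h => hv (Subtype.ext h)

theorem frattini_pgroup {P : Type*} [Group P] [Finite P] (p : ℕ) [hp : Fact p.Prime]
    (hP : IsPGroup p P) (hF : frattini P = ⊥) :
    (∀ x y : P, x * y = y * x) ∧ ∀ x : P, x ^ p = 1 := by
  have hnil := hP.isNilpotent
  have key : ∀ M : Subgroup P, IsCoatom M → (∀ x y : P, x * y * x⁻¹ * y⁻¹ ∈ M) ∧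
      ∀ x : P, x ^ p ∈ M := by
    intro M hM
    have hMn : M.Normal :=
      Subgroup.NormalizerCondition.normal_of_coatom M Group.normalizerCondition_of_isNilpotent hM
    have hnt : Nontrivial (P ⧸ M) := by
      rw [QuotientGroup.nontrivial_iff]; exact hM.1
    -- index is prime
    have hidx : M.index.Prime := by
      obtain ⟨b, hb⟩ : ∃ b, b ∉ M := by
        by_contra! hc
        exact hM.1 ((Subgroup.eq_top_iff' _).2 hc)
      have hbt : M ⊔ Subgroup.zpowers b = ⊤ := hM.2 _ (left_lt_sup.2 (fun hc => hb (hc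
        (Subgroup.mem_zpowers b))))
      refine prime_of_ch M hM le_rfl (Relation.ReflTransGen.single ⟨hMn, inferInstance, le_top, b,
        trivial, fun x _ => ?_⟩)
      have hx : x ∈ M ⊔ Subgroup.zpowers b := by rw [hbt]; trivial
      rw [← SetLike.mem_coe, Subgroup.normal_mul] at hx
      obtain ⟨m, hm, _, ⟨j, rfl⟩, rfl⟩ := hx
      exact ⟨-j, by simpa using hm⟩
    obtain ⟨n, hn⟩ := hP.index M
    have hip : M.index = p := by
      rw [hn] at hidx ⊢
      rw [(Nat.Prime.eq_one_of_pow hidx), pow_one]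
    have hcq : Nat.card (P ⧸ M) = p := hip
    have hcyc : IsCyclic (P ⧸ M) := isCyclic_of_prime_card hcq
    constructor
    · intro x y
      rw [← QuotientGroup.eq_one_iff]
      simp only [QuotientGroup.mk_mul, QuotientGroup.mk_inv]
      have : (x : P ⧸ M) * y = y * x := (IsCyclic.commGroup (α := P ⧸ M)).mul_comm _ _
      rw [this]; group
    · intro x
      rw [← QuotientGroup.eq_one_iff, QuotientGroup.mk_pow, ← hcq, pow_card_eq_one']
  have hmem : ∀ z : P, (∀ M : Subgroup P, IsCoatom M → z ∈ M) → z = 1 := by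
    intro z hz
    have : z ∈ frattini P := by
      simp only [frattini, Order.radical, Subgroup.mem_iInf]
      exact hz
    rwa [hF, Subgroup.mem_bot] at this
  refine ⟨fun x y => ?_, fun x => hmem _ fun M hM => (key M hM).2 x⟩
  have := hmem _ fun M hM => (key M hM).1 x y
  rw [mul_inv_eq_one, mul_inv_eq_iff_eq_mul] at this
  exact this

theorem exists_minimalNormal {G : Type*} [Group G] [Finite G] (F : Subgroup G) (hF : F.Normal)
    (hne : F ≠ ⊥) : ∃ N ≤ F, IsMinimalNormal N := by
  obtain ⟨N, hNF, hN⟩ := (Set.toFinite {N : Subgroup G | N.Normal ∧ N ≠ ⊥}).exists_le_minimal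
    (show F ∈ _ from ⟨hF, hne⟩)
  refine ⟨N, hNF, hN.1.1, hN.1.2, fun M hM hMN hMne => ?_⟩
  exact le_antisymm hMN (hN.2 ⟨hM, hMne⟩ hMN)

theorem huppert_aux (n : ℕ) : ∀ (G : Type*) [Group G] [Finite G], Nat.card G = n → MP G →
    IsSupersoluble G := by
  induction n using Nat.strong_induction_on with
  | _ n ih =>
  intro G _ _ hn hG
  rcases subsingleton_or_nontrivial G with hs | hnt
  · rw [ss_iff]
    have : (⊥ : Subgroup G) = ⊤ := Subsingleton.elim _ _
    rw [this]; exact Relation.ReflTransGen.refl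
  have hch : ∀ N : Subgroup G, IsMinimalNormal N → Ch N ⊤ := by
    intro N hN
    have := hN.1
    refine ch_of_quot N (ih (Nat.card (G ⧸ N)) ?_ (G ⧸ N) rfl (hG.quot N))
    rw [← hn, Subgroup.card_eq_card_quotient_mul_card_subgroup N]
    have h1 : 1 < Nat.card N := by
      have : Nontrivial N := (Subgroup.nontrivial_iff_ne_bot N).2 hN.2.1
      exact Finite.one_lt_card
    exact lt_mul_of_one_lt_right Nat.card_pos h1
  suffices h : ∃ N : Subgroup G, IsMinimalNormal N ∧ ∃ v, N = Subgroup.zpowers v by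
    obtain ⟨N, hN, v, hv⟩ := h
    rw [ss_iff]
    refine Relation.ReflTransGen.head ⟨inferInstance, hN.1, bot_le, v, ?_, ?_⟩ (hch N hN)
    · rw [hv]; exact Subgroup.mem_zpowers v
    · intro x hx
      rw [hv] at hx
      obtain ⟨k, rfl⟩ := hx
      exact ⟨-k, by simp⟩
  have hcard : 1 < Nat.card G := Finite.one_lt_card
  obtain ⟨p, hpm, hmax⟩ := (Nat.card G).primeFactors.exists_max_image id
    (Nat.nonempty_primeFactors.2 hcard)
  have hp : Fact p.Prime := ⟨Nat.prime_of_mem_primeFactors hpm⟩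
  obtain ⟨P⟩ : Nonempty (Sylow p G) := inferInstance
  have hPn := sylow_normal hG p
    (fun q hq hd => hmax q (Nat.mem_primeFactors.2 ⟨hq, hd, by omega⟩)) P
  by_cases hF : frattini (P : Subgroup G) = ⊥
  · obtain ⟨h1, h2⟩ := frattini_pgroup p P.2 hF
    have hPne : (P : Subgroup G) ≠ ⊥ :=
      P.ne_bot_of_dvd_card (Nat.dvd_of_mem_primeFactors hpm)
    obtain ⟨N, hNP, hN⟩ := exists_minimalNormal (P : Subgroup G) hPn hPne
    have hpr := abelian_case hG p P hPn
      (fun x hx y hy => congrArg Subtype.val (h1 ⟨x, hx⟩ ⟨y, hy⟩))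
      (fun x hx => congrArg Subtype.val (h2 ⟨x, hx⟩)) hN hNP
    have : Fact (Nat.card N).Prime := ⟨hpr⟩
    have hc : IsCyclic N := isCyclic_of_prime_card rfl
    obtain ⟨v, hv⟩ := (Subgroup.isCyclic_iff_exists_zpowers_eq_top N).1 hc
    exact ⟨N, hN, v, hv.symm⟩
  · obtain ⟨N, hNP, hN⟩ := exists_minimalNormal
      ((frattini (P : Subgroup G)).map (P : Subgroup G).subtype) inferInstance (by
        rw [Ne, Subgroup.map_eq_bot_iff_of_injective _ (P : Subgroup G).subtype_injective]
        exact hF)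
    exact ⟨N, hN, frattini_case p P hN hNP (hch N hN)⟩

end KU

/-- If every `(n+1)`-maximal subgroup of `G` is `K`-`𝔘`-subnormal in `G`, then every
`(n+2)`-maximal subgroup of `G` is `K`-`𝔘`-subnormal in `G`. -/
theorem succ_nmaximal_KUsubnormal_of_KUsubnormal (G : Type*) [Group G] [Finite G] (n : ℕ)
    (h : ∀ H : Subgroup G, IsNMaximal (n + 1) H → IsKUSubnormal H) :
    ∀ H : Subgroup G, IsNMaximal (n + 2) H → IsKUSubnormal H :=
  KU.main_of (fun L hL => KU.huppert_aux _ L rfl hL) n h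
end

section
/- If every 3-maximal subgroup of a finite group G is K-𝔘-subnormal in G, then G is soluble. -/
open Subgroup

namespace KUAux

universe u

theorem supersoluble_solvable {G : Type u} [Group G] (h : IsSupersoluble G) :
    Group.IsSolvable G := by
  obtain ⟨n, c, hc, h0, h1, hs⟩ := h
  have key : ∀ i : Fin (n + 1), Group.IsSolvable (c i) := by
    intro i
    induction i using Fin.induction with
    | zero => rw [h0]; infer_instance
    | succ i ih =>
      obtain ⟨hle, hcyc⟩ := hs i
      haveI := (hc i.castSucc).subgroupOf (c i.succ)
      rw [Group.isSolvable_iff_subgroup_quotient ((c i.castSucc).subgroupOf (c i.succ))]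
      constructor
      · exact Group.isSolvable_of_isSolvable_injective
          (f := (Subgroup.subgroupOfEquivOfLe hle).toMonoidHom)
          (Subgroup.subgroupOfEquivOfLe hle).injective
      · exact Group.isSolvable_of_comm (IsCyclic.isMulCommutative
          (α := (↥(c i.succ) ⧸ ((c i.castSucc).subgroupOf (c i.succ))))).is_comm.comm
  have := key (Fin.last n)
  rw [h1] at this
  exact Group.isSolvable_of_surjective (f := (⊤ : Subgroup G).subtype) (fun x => ⟨⟨x, trivial⟩, rfl⟩)

theorem derived_le_of_quot {G : Type u} [Group G] (N : Subgroup G) [N.Normal]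
    (h : Group.IsSolvable (G ⧸ N)) : ∃ n, derivedSeries G n ≤ N := by
  obtain ⟨n, hn⟩ := h
  refine ⟨n, fun x hx => ?_⟩
  have := map_derivedSeries_le_derivedSeries (QuotientGroup.mk' N) n (Subgroup.mem_map_of_mem _ hx)
  rw [hn, Subgroup.mem_bot] at this
  exact (QuotientGroup.eq_one_iff x).1 this

/-- one step, with solvable in place of supersoluble -/
def KStep {G : Type u} [Group G] (H K : Subgroup G) : Prop :=
  H ≤ K ∧ ((H.subgroupOf K).Normal ∨ ∃ n, derivedSeries K n ≤ H.subgroupOf K)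

/-- chain -/
def KW {G : Type u} [Group G] (H : Subgroup G) : Prop := Relation.ReflTransGen KStep H ⊤

theorem KW_of {G : Type u} [Group G] {H : Subgroup G} (h : IsKUSubnormal H) : KW H := by
  obtain ⟨n, c, h0, h1, hs⟩ := h
  have key : ∀ i : Fin (n + 1), Relation.ReflTransGen KStep H (c i) := by
    intro i
    induction i using Fin.induction with
    | zero => rw [h0]
    | succ i ih =>
      refine ih.tail ⟨(hs i).1, ?_⟩
      rcases (hs i).2 with h | h
      · exact Or.inl h
      · obtain ⟨n, hn⟩ := derived_le_of_quot _ (supersoluble_solvable h)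
        exact Or.inr ⟨n, hn.trans (Subgroup.normalCore_le _)⟩
  have := key (Fin.last n)
  rwa [h1] at this

theorem KStep.restrict {G : Type u} [Group G] {H K : Subgroup G} (M : Subgroup G)
    (h : KStep H K) : KStep (H.subgroupOf M) (K.subgroupOf M) := by
  obtain ⟨hle, h⟩ := h
  let φ : K.subgroupOf M →* K :=
    (M.subtype.comp (K.subgroupOf M).subtype).codRestrict K (fun x => x.2)
  refine ⟨Subgroup.comap_mono hle, ?_⟩
  rcases h with h | ⟨n, hn⟩
  · left
    exact h.comap φ
  · refine Or.inr ⟨n, fun x hx => ?_⟩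
    exact hn (map_derivedSeries_le_derivedSeries φ n (Subgroup.mem_map_of_mem _ hx))

theorem KW.restrict {G : Type u} [Group G] {H : Subgroup G} (M : Subgroup G)
    (h : KW H) : KW (H.subgroupOf M) := by
  unfold KW at h ⊢
  have := Relation.ReflTransGen.lift (r := KStep) (p := KStep) (fun K : Subgroup G => K.subgroupOf M)
    (fun a b hab => KStep.restrict M hab) _ _ h
  exact this

theorem KW.top {G : Type u} [Group G] {H : Subgroup G} (h : KW H) (hH : H ≠ ⊤) :
    ∃ L, H ≤ L ∧ L ≠ ⊤ ∧ (L.Normal ∨ ∃ n, derivedSeries G n ≤ L) := by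
  have key : ∃ L, H ≤ L ∧ L ≠ ⊤ ∧ KStep L ⊤ := by
    unfold KW at h
    induction h using Relation.ReflTransGen.head_induction_on with
    | refl => exact absurd rfl hH
    | head hac hcb ih =>
      rename_i a c
      by_cases hc : c = ⊤
      · subst hc; exact ⟨a, le_rfl, hH, hac⟩
      · obtain ⟨L, h1, h2⟩ := ih hc
        exact ⟨L, hac.1.trans h1, h2⟩
  obtain ⟨L, h1, h2, -, h3⟩ := key
  refine ⟨L, h1, h2, ?_⟩
  let φ : G →* (⊤ : Subgroup G) := (Subgroup.topEquiv (G := G)).symm.toMonoidHom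
  rcases h3 with h | ⟨n, hn⟩
  · exact Or.inl (h.comap φ)
  · exact Or.inr ⟨n, fun x hx =>
      hn (map_derivedSeries_le_derivedSeries φ n (Subgroup.mem_map_of_mem _ hx))⟩

theorem max_iff {G : Type u} [Group G] {H K : Subgroup G} : IsMaximalIn H K ↔ H ⋖ K := by
  constructor
  · rintro ⟨hle, hne, hm⟩
    refine ⟨lt_of_le_of_ne hle ?_, ?_⟩
    · rintro rfl; exact hne (Subgroup.subgroupOf_self _)
    · intro L h1 h2
      have := hm (L.subgroupOf K) (lt_of_le_of_ne (Subgroup.comap_mono h1.le) ?_)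
      · exact absurd (Subgroup.subgroupOf_eq_top.1 this) (not_le_of_gt h2)
      · intro he
        have := congrArg (Subgroup.map K.subtype) he
        rw [Subgroup.map_subgroupOf_eq_of_le hle, Subgroup.map_subgroupOf_eq_of_le h2.le] at this
        exact h1.ne this
  · intro h
    refine ⟨h.le, ?_, ?_⟩
    · intro he; exact absurd (Subgroup.subgroupOf_eq_top.1 he) (not_le_of_gt h.lt)
    · intro L hL
      have h1 : H ≤ L.map K.subtype := by
        rw [← Subgroup.map_subgroupOf_eq_of_le h.le]; exact Subgroup.map_mono hL.le
      have h2 : L.map K.subtype ≤ K := Subgroup.map_subtype_le L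
      rcases h.eq_or_eq h1 h2 with he | he
      · exfalso
        apply hL.ne
        rw [← he]
        exact Subgroup.comap_map_eq_self_of_injective K.subtype_injective L
      · rw [eq_top_iff]
        intro x _
        have : (x : G) ∈ L.map K.subtype := by rw [he]; exact x.2
        obtain ⟨y, hy, hxy⟩ := this
        rwa [← Subtype.ext hxy]

theorem covBy_map {G : Type u} [Group G] {M : Subgroup G} {H K : Subgroup M} (h : H ⋖ K) :
    H.map M.subtype ⋖ K.map M.subtype := by
  have inj := Subgroup.map_injective M.subtype_injective
  refine ⟨lt_of_le_of_ne (Subgroup.map_mono h.le) (fun he => h.ne (inj he)), ?_⟩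
  intro L h1 h2
  have hL : (L.subgroupOf M).map M.subtype = L :=
    Subgroup.map_subgroupOf_eq_of_le (h2.le.trans (Subgroup.map_subtype_le K))
  rw [← hL] at h1 h2
  exact h.2 ((Subgroup.map_lt_map_iff_of_injective M.subtype_injective).1 h1)
    ((Subgroup.map_lt_map_iff_of_injective M.subtype_injective).1 h2)

theorem covBy_comap {G Q : Type u} [Group G] [Group Q] {f : G →* Q}
    (hf : Function.Surjective f) {H K : Subgroup Q} (h : H ⋖ K) :
    H.comap f ⋖ K.comap f := by
  refine ⟨(Subgroup.comap_lt_comap_of_surjective hf).2 h.lt, ?_⟩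
  intro L h1 h2
  have hL : (L.map f).comap f = L := by
    apply Subgroup.comap_map_eq_self
    exact le_trans (Subgroup.ker_le_comap f H) h1.le
  rw [← hL] at h1 h2
  exact h.2 ((Subgroup.comap_lt_comap_of_surjective hf).1 h1)
    ((Subgroup.comap_lt_comap_of_surjective hf).1 h2)

theorem nmax_map {G : Type u} [Group G] {M : Subgroup G} (hM : IsCoatom M) :
    ∀ (n : ℕ) (H : Subgroup M), IsNMaximal n H → IsNMaximal (n + 1) (H.map M.subtype)
  | 0, H, h => by
    have h : H = ⊤ := h
    subst h
    refine ⟨⊤, rfl, max_iff.2 ?_⟩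
    rw [← MonoidHom.range_eq_map, Subgroup.range_subtype]
    exact hM.covBy_top
  | n + 1, H, ⟨K, hK, hH⟩ =>
    ⟨K.map M.subtype, nmax_map hM n K hK, max_iff.2 (covBy_map (max_iff.1 hH))⟩

theorem nmax_comap {G Q : Type u} [Group G] [Group Q] {f : G →* Q}
    (hf : Function.Surjective f) :
    ∀ (n : ℕ) (H : Subgroup Q), IsNMaximal n H → IsNMaximal n (H.comap f)
  | 0, H, h => by
    have h : H = ⊤ := h
    subst h
    exact Subgroup.comap_top f
  | n + 1, H, ⟨K, hK, hH⟩ =>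
    ⟨K.comap f, nmax_comap hf n K hK, max_iff.2 (covBy_comap hf (max_iff.1 hH))⟩

theorem cyclic_of_bot_covBy {G : Type u} [Group G] {K : Subgroup G} (h : ⊥ ⋖ K) :
    IsCyclic K := by
  obtain ⟨x, hx, hx1⟩ := (Subgroup.bot_or_exists_ne_one K).resolve_left h.lt.ne'
  have h2 : Subgroup.zpowers x ≤ K := by simpa using hx
  rcases h.eq_or_eq bot_le h2 with he | he
  · exact absurd (Subgroup.zpowers_eq_bot.1 he) hx1
  · rw [← he]; infer_instance

theorem simple_case {G : Type u} [Group G] [Finite G] (hs : ∀ N : Subgroup G, N.Normal → N = ⊥ ∨ N = ⊤)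
    (h : ∀ H K L : Subgroup G, H ⋖ K → K ⋖ L → IsCoatom L → H = ⊥) : Group.IsSolvable G := by
  by_cases hn : Nat.card G = 1
  · have := (Nat.card_eq_one_iff_unique.mp hn).1
    infer_instance
  have := Fact.mk (Nat.minFac_prime hn)
  obtain ⟨P⟩ : Nonempty (Sylow (Nat.card G).minFac G) := inferInstance
  by_cases hPt : (P : Subgroup G) = ⊤
  · have h1 : Group.IsNilpotent P := P.2.isNilpotent
    have h2 : Group.IsSolvable (P : Subgroup G) := inferInstance
    rw [hPt] at h2
    exact Group.isSolvable_of_surjective (f := (⊤ : Subgroup G).subtype)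
      (fun x => ⟨⟨x, trivial⟩, rfl⟩)
  have hPb : (P : Subgroup G) ≠ ⊥ := P.ne_bot_of_dvd_card (Nat.minFac_dvd _)
  exfalso
  have fin : ¬ (normalizer P ≤ centralizer (P : Set G)) := by
    intro hP
    have hc := MonoidHom.ker_transferSylow_isComplement' P hP
    rcases hs _ (MonoidHom.normal_ker (MonoidHom.transferSylow P hP)) with he | he
    · rw [he] at hc
      exact hPt (Subgroup.isComplement'_bot_left.1 hc)
    · rw [he] at hc
      exact hPb (Subgroup.isComplement'_top_left.1 hc)
  have hncyc : ¬ IsCyclic P := fun hc => fin (hc.normalizer_le_centralizer rfl)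
  have small : ∀ K L : Subgroup G, K ⋖ L → IsCoatom L → K ≠ ⊥ → ⊥ ⋖ K := by
    intro K L h1 h2 h3
    obtain ⟨H, -, hH⟩ := exists_le_covBy_of_lt (bot_lt_iff_ne_bot.2 h3)
    have := h H K L hH h1 h2
    rwa [this] at hH
  have hco : IsCoatom (P : Subgroup G) := by
    obtain ⟨L, hPL, hL⟩ := exists_le_covBy_of_lt (lt_top_iff_ne_top.2 hPt)
    rcases hPL.eq_or_lt with he | hlt
    · rw [he]; exact covBy_top_iff.1 hL
    exfalso
    obtain ⟨K, hPK, hK⟩ := exists_le_covBy_of_lt hlt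
    have hb := small K L hK (covBy_top_iff.1 hL) (fun hb => hPb (le_bot_iff.1 (hb ▸ hPK)))
    rcases hb.eq_or_eq bot_le hPK with he | he
    · exact hPb he
    · apply hncyc
      change IsCyclic (P : Subgroup G)
      rw [he]; exact cyclic_of_bot_covBy hb
  have hab : (P : Subgroup G) ≤ centralizer (P : Set G) := by
    by_contra hnab
    have : Nontrivial (P : Subgroup G) := (Subgroup.nontrivial_iff_ne_bot _).2 hPb
    have hZ : Nontrivial (Subgroup.center P) := P.2.center_nontrivial
    obtain ⟨z, hz⟩ := exists_ne (1 : Subgroup.center P)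
    set Z : Subgroup G := (P : Subgroup G) ⊓ centralizer (P : Set G) with hZdef
    have hzZ : ((z : P) : G) ∈ Z := by
      refine Subgroup.mem_inf.2 ⟨(z : P).2, ?_⟩
      rw [Subgroup.mem_centralizer_iff]
      intro y hy
      have := Subgroup.mem_center_iff.1 z.2 ⟨y, hy⟩
      exact congrArg Subtype.val this
    have hz1 : ((z : P) : G) ≠ 1 := by
      intro h1; apply hz; ext; exact h1
    have hZP : Z < P := by
      refine lt_of_le_of_ne inf_le_left (fun he => hnab ?_)
      exact inf_eq_left.1 he
    obtain ⟨K, hZK, hK⟩ := exists_le_covBy_of_lt hZP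
    have hZb : Z ≠ ⊥ := fun hb => hz1 (by rw [hb] at hzZ; exact Subgroup.mem_bot.1 hzZ)
    have hb := small K P hK hco (fun hb => hZb (le_bot_iff.1 (hb ▸ hZK)))
    have hKZ : Z = K := (hb.eq_or_eq bot_le hZK).resolve_left hZb
    obtain ⟨x, hxP, hxZ⟩ := SetLike.exists_of_lt hZP
    apply hxZ
    refine Subgroup.mem_inf.2 ⟨hxP, ?_⟩
    have hle : Z ≤ (P : Subgroup G) ⊓ centralizer {x} := by
      intro y hy
      refine Subgroup.mem_inf.2 ⟨hy.1, ?_⟩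
      rw [Subgroup.mem_centralizer_singleton_iff]
      have := (Subgroup.mem_centralizer_iff.1 hy.2 x hxP)
      exact this.symm
    have hx' : x ∈ (P : Subgroup G) ⊓ centralizer {x} :=
      Subgroup.mem_inf.2 ⟨hxP, by rw [Subgroup.mem_centralizer_singleton_iff]⟩
    rw [← hKZ] at hK
    rcases hK.eq_or_eq hle inf_le_left with he | he
    · exact absurd (he ▸ hx') hxZ
    · rw [Subgroup.mem_centralizer_iff]
      intro y hy
      have hy' : y ∈ (P : Subgroup G) ⊓ centralizer {x} := by rw [he]; exact hy
      have := Subgroup.mem_centralizer_singleton_iff.1 hy'.2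
      exact this
  apply fin
  rcases hco.le_iff.1 (Subgroup.le_normalizer (H := (P : Subgroup G))) with he | he
  · rcases hs _ (Subgroup.normalizer_eq_top_iff.1 he) with h1 | h1
    · exact absurd h1 hPb
    · exact absurd h1 hPt
  · exact he.le.trans hab

theorem base {G : Type u} [Group G] [Finite G] (h : ∀ M : Subgroup G, IsCoatom M → KW M) :
    Group.IsSolvable G := by
  have key : ∀ M : Subgroup G, ∃ n, IsCoatom M → derivedSeries G n ≤ M := by
    intro M
    by_cases hM : IsCoatom M
    swap
    · exact ⟨0, fun h => absurd h hM⟩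
    obtain ⟨L, h1, h2, h3⟩ := (h M hM).top hM.1
    have : L = M := (hM.le_iff.1 h1).resolve_left h2
    subst this
    rcases h3 with h3 | ⟨n, hn⟩
    swap
    · exact ⟨n, fun _ => hn⟩
    have hsol : Group.IsSolvable (G ⧸ L) := by
      obtain ⟨x, hx⟩ := SetLike.exists_not_mem_of_ne_top L h2 rfl
      let y : G ⧸ L := QuotientGroup.mk' L x
      have hle : L ≤ (Subgroup.zpowers y).comap (QuotientGroup.mk' L) := by
        have := Subgroup.ker_le_comap (QuotientGroup.mk' L) (Subgroup.zpowers y)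
        rwa [QuotientGroup.ker_mk'] at this
      have htop : (Subgroup.zpowers y).comap (QuotientGroup.mk' L) = ⊤ := by
        refine (hM.le_iff.1 hle).resolve_right (fun he => hx ?_)
        rw [← he]
        exact Subgroup.mem_zpowers y
      have hy : ∀ z : G ⧸ L, z ∈ Subgroup.zpowers y := by
        intro z
        obtain ⟨w, rfl⟩ := QuotientGroup.mk'_surjective L z
        have : w ∈ (Subgroup.zpowers y).comap (QuotientGroup.mk' L) := htop ▸ Subgroup.mem_top w
        exact this
      have : IsCyclic (G ⧸ L) := ⟨y, hy⟩
      exact Group.isSolvable_of_comm (IsCyclic.isMulCommutative (α := G ⧸ L)).is_comm.comm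
    obtain ⟨n, hn⟩ := derived_le_of_quot L hsol
    exact ⟨n, fun _ => hn⟩
  choose f hf using key
  obtain ⟨N, hN⟩ : ∃ N, ∀ M, f M ≤ N := by
    obtain ⟨N, hN⟩ := (Set.finite_range f).bddAbove
    exact ⟨N, fun M => hN ⟨M, rfl⟩⟩
  have hle : derivedSeries G N ≤ frattini G := by
    unfold frattini Order.radical
    refine le_iInf₂ fun M hM => (derivedSeries_antitone G (hN M)).trans (hf M hM)
  have hfr : Group.IsNilpotent (frattini G) := frattini_nilpotent
  rw [Group.isSolvable_iff_subgroup_quotient (derivedSeries G N)]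
  constructor
  · exact Group.isSolvable_of_isSolvable_injective (f := Subgroup.inclusion hle)
      (Subgroup.inclusion_injective hle)
  · refine ⟨N, ?_⟩
    rw [← map_derivedSeries_eq (QuotientGroup.mk'_surjective (derivedSeries G N))]
    rw [Subgroup.map_eq_bot_iff, QuotientGroup.ker_mk']

theorem step {G : Type u} [Group G] [Finite G] (n : ℕ) (hn : n < 3)
    (hsub : ∀ M : Subgroup G, IsCoatom M → Group.IsSolvable M)
    (h : ∀ H : Subgroup G, IsNMaximal (n + 1) H → KW H) : Group.IsSolvable G := by
  by_contra hG
  have hsub' : ∀ M : Subgroup G, M ≠ ⊤ → Group.IsSolvable M := by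
    intro M hM
    obtain ⟨L, hL, hML⟩ := (eq_top_or_exists_le_coatom M).resolve_left hM
    have := hsub L hL
    exact Group.isSolvable_of_isSolvable_injective (f := Subgroup.inclusion hML)
      (Subgroup.inclusion_injective hML)
  have hder : ∀ n, derivedSeries G n = ⊤ := by
    intro n
    by_contra hne
    apply hG
    rw [Group.isSolvable_iff_subgroup_quotient (derivedSeries G n)]
    refine ⟨hsub' _ hne, n, ?_⟩
    rw [← map_derivedSeries_eq (QuotientGroup.mk'_surjective (derivedSeries G n))]
    rw [Subgroup.map_eq_bot_iff, QuotientGroup.ker_mk']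
  have hnt : (⊥ : Subgroup G) ≠ ⊤ := by
    intro he
    exact hG (Group.isSolvable_of_top_eq_bot G he.symm)
  obtain ⟨R, ⟨hRn, hRt⟩, hRmax⟩ := (Set.toFinite {N : Subgroup G | N.Normal ∧ N ≠ ⊤}).exists_maximal
    ⟨⊥, inferInstance, hnt⟩
  have hRmax' : ∀ N : Subgroup G, N.Normal → N ≠ ⊤ → N ≤ R := by
    intro N hN hNt
    have hsup : R ⊔ N ≠ ⊤ := by
      intro he
      apply hG
      rw [Group.isSolvable_iff_subgroup_quotient R]
      refine ⟨hsub' R hRt, ?_⟩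
      have := hsub' N hNt
      refine Group.isSolvable_of_surjective (f := (QuotientGroup.mk' R).comp N.subtype) ?_
      rw [← MonoidHom.range_eq_top, MonoidHom.range_comp, Subgroup.range_subtype]
      apply Subgroup.comap_injective (QuotientGroup.mk'_surjective R)
      rw [Subgroup.comap_map_eq, QuotientGroup.ker_mk', sup_comm, he, Subgroup.comap_top]
    exact le_sup_right.trans (hRmax ⟨inferInstance, hsup⟩ le_sup_left)
  have hmaxR : ∀ H : Subgroup G, IsNMaximal (n + 1) H → H ≤ R := by
    intro H hH
    have hne : H ≠ ⊤ := by
      obtain ⟨K, -, hK⟩ := hH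
      exact ((max_iff.1 hK).lt.trans_le le_top).ne
    obtain ⟨L, h1, h2, h3⟩ := (h H hH).top hne
    rcases h3 with h3 | ⟨m, hm⟩
    · exact h1.trans (hRmax' L h3 h2)
    · rw [hder] at hm
      exact absurd (top_le_iff.1 hm) h2
  have hquot : ∀ H : Subgroup (G ⧸ R), IsNMaximal (n + 1) H → H = ⊥ := by
    intro H hH
    have h1 := hmaxR _ (nmax_comap (QuotientGroup.mk'_surjective R) _ H hH)
    apply Subgroup.comap_injective (QuotientGroup.mk'_surjective R)
    rw [MonoidHom.comap_bot, QuotientGroup.ker_mk']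
    refine le_antisymm h1 ?_
    have := Subgroup.ker_le_comap (QuotientGroup.mk' R) H
    rwa [QuotientGroup.ker_mk'] at this
  apply hG
  rw [Group.isSolvable_iff_subgroup_quotient R]
  refine ⟨hsub' R hRt, simple_case ?_ ?_⟩
  · intro N hN
    by_cases hNt : N.comap (QuotientGroup.mk' R) = ⊤
    · right
      apply Subgroup.comap_injective (QuotientGroup.mk'_surjective R)
      rw [hNt, Subgroup.comap_top]
    · left
      apply Subgroup.comap_injective (QuotientGroup.mk'_surjective R)
      rw [MonoidHom.comap_bot, QuotientGroup.ker_mk']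
      refine le_antisymm (hRmax' _ inferInstance hNt) ?_
      have := Subgroup.ker_le_comap (QuotientGroup.mk' R) N
      rwa [QuotientGroup.ker_mk'] at this
  · intro H K L hHK hKL hL
    have m1 : IsNMaximal 1 L := ⟨⊤, rfl, max_iff.2 hL.covBy_top⟩
    have m2 : IsNMaximal 2 K := ⟨L, m1, max_iff.2 hKL⟩
    have m3 : IsNMaximal 3 H := ⟨K, m2, max_iff.2 hHK⟩
    interval_cases n
    · exact absurd (hquot L m1) (ne_bot_of_gt hKL.lt)
    · exact absurd (hquot K m2) (ne_bot_of_gt hHK.lt)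
    · exact hquot H m3

theorem main : ∀ (n : ℕ), n < 3 → ∀ (G : Type u) [Group G] [Finite G],
    (∀ H : Subgroup G, IsNMaximal (n + 1) H → KW H) → Group.IsSolvable G
  | 0, _, G, _, _, h => base fun M hM => h M ⟨⊤, rfl, max_iff.2 hM.covBy_top⟩
  | n + 1, hn, G, _, _, h => by
    refine step (n + 1) hn (fun M hM => main n (by omega) M ?_) h
    intro H hH
    have := (h _ (nmax_map hM _ H hH)).restrict M
    have he : (H.map M.subtype).subgroupOf M = H :=
      Subgroup.comap_map_eq_self_of_injective M.subtype_injective H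
    rwa [he] at this

end KUAux

/-- If every `3`-maximal subgroup of `G` is `K`-`𝔘`-subnormal in `G`, then `G` is soluble. -/
theorem solvable_of_3maximal_KUsubnormal (G : Type*) [Group G] [Finite G]
    (h : ∀ H : Subgroup G, IsNMaximal 3 H → IsKUSubnormal H) :
    IsSolvable G := by
  exact KUAux.main 2 (by norm_num) G fun H hH => KUAux.KW_of (h H hH)
end

section
/- If H is a maximal subgroup of a finite group G and H is K-𝔘-subnormal in G, then the index |G : H| is a prime number. -/
open Subgroup

lemma aux_orbit {G α : Type*} [Group G] [MulAction G α] [Finite α] (b : G) (a : α)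
    (h : ∀ x : α, ∃ j : ℤ, b ^ j • a = x) :
    Function.minimalPeriod (b • ·) a = Nat.card α := by
  have : Fintype (MulAction.orbit (Subgroup.zpowers b) a) := Fintype.ofFinite _
  have h2 : MulAction.orbit (Subgroup.zpowers b) a = Set.univ := by
    refine Set.eq_univ_of_forall fun x => ?_
    obtain ⟨j, hj⟩ := h x
    exact ⟨⟨b ^ j, Subgroup.mem_zpowers_iff.2 ⟨_, rfl⟩⟩, hj⟩
  rw [MulAction.minimalPeriod_eq_card, ← Nat.card_eq_fintype_card, h2, Nat.card_univ]

lemma aux_core {G : Type*} [Group G] [Finite G] (M A : Subgroup G) (hM : IsCoatom M)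
    [A.Normal] (hA : A ≤ M) (b : G) (hb : b ∉ M)
    (hconj : ∀ g : G, ∃ j : ℤ, ((g * b * g⁻¹ : G) : G ⧸ A) = (b : G ⧸ A) ^ j) :
    Nat.Prime M.index := by
  classical
  have hAM : ∀ x y : G, (x : G ⧸ A) = (y : G ⧸ A) → y ∈ M → x ∈ M := by
    intro x y h hy
    have h1 := hA (QuotientGroup.eq.1 h)
    have h2 := M.mul_mem hy (M.inv_mem h1)
    simpa using h2
  -- the key: for each k, if b^k ∉ M then every g is m * e
  have key : ∀ k : ℕ, b ^ k ∉ M → ∀ g : G, ∃ j : ℤ, ∃ m ∈ M, g = b ^ (k * j) * m := by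
    intro k hk g
    let E : Subgroup G := (Subgroup.zpowers ((b : G ⧸ A) ^ k)).comap (QuotientGroup.mk' A)
    have hE : E.Normal := by
      refine ⟨fun x hx g => ?_⟩
      obtain ⟨i, hi⟩ := Subgroup.mem_zpowers_iff.1 (Subgroup.mem_comap.1 hx)
      obtain ⟨j, hj⟩ := hconj g
      refine Subgroup.mem_comap.2 (Subgroup.mem_zpowers_iff.2 ⟨j * i, ?_⟩)
      simp only [QuotientGroup.mk'_apply, QuotientGroup.mk_mul, QuotientGroup.mk_inv] at hi hj ⊢
      rw [← hi, ← conj_zpow, ← conj_pow, hj]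
      simp only [← zpow_natCast, ← zpow_mul]
      congr 1; ring
    have hbE : b ^ k ∈ E := by
      refine Subgroup.mem_comap.2 (Subgroup.mem_zpowers_iff.2 ⟨1, ?_⟩)
      simp
    have htop : E ⊔ M = ⊤ := by
      refine hM.2 _ (lt_of_le_of_ne le_sup_right ?_)
      intro h
      exact hk (h ▸ (le_sup_left : E ≤ E ⊔ M) hbE)
    have hg : g ∈ E ⊔ M := htop ▸ Subgroup.mem_top g
    rw [← SetLike.mem_coe, Subgroup.normal_mul] at hg
    obtain ⟨e, he, m, hm, rfl⟩ := Set.mem_mul.1 hg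
    obtain ⟨i, hi⟩ := Subgroup.mem_zpowers_iff.1 (Subgroup.mem_comap.1 he)
    refine ⟨i, (b ^ ((k:ℤ) * i))⁻¹ * e * m, M.mul_mem (hA ?_) hm, by group⟩
    rw [← QuotientGroup.eq]
    rw [QuotientGroup.mk'_apply] at hi
    rw [← hi, zpow_mul, zpow_natCast]; rfl
  let n := Function.minimalPeriod (b • ·) ((1 : G) : G ⧸ M)
  have hn : ∀ k : ℤ, b ^ k ∈ M ↔ (n : ℤ) ∣ k := by
    intro k
    rw [← MulAction.zpow_smul_eq_iff_minimalPeriod_dvd, eq_comm, MulAction.Quotient.smul_coe,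
      QuotientGroup.eq]
    simp
  have hidx : M.index = n := by
    refine (aux_orbit b ((1 : G) : G ⧸ M) fun x => ?_).symm
    obtain ⟨g, rfl⟩ := QuotientGroup.mk_surjective x
    obtain ⟨j, m, hm, rfl⟩ := key 1 (by simpa using hb) g
    refine ⟨((1 : ℕ) : ℤ) * j, ?_⟩
    change ((b ^ (((1 : ℕ) : ℤ) * j) * 1 : G) : G ⧸ M) = _
    rw [QuotientGroup.eq]
    simpa using hm
  have hn1 : n ≠ 1 := by
    intro h
    apply hb
    have := (hn 1).2 (by simp [h])
    simpa using this
  obtain ⟨p, hp, hpn⟩ := Nat.exists_prime_and_dvd hn1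
  by_cases hbp : b ^ p ∈ M
  · have : (n : ℤ) ∣ p := (hn p).1 (by simpa using hbp)
    have h2 : n = p := Nat.dvd_antisymm (Int.natCast_dvd_natCast.1 this) hpn
    rw [hidx, h2]; exact hp
  · exfalso
    obtain ⟨j, m, hm, hj⟩ := key p hbp b
    have h3 : b ^ (1 - (p : ℤ) * j) ∈ M := by
      have : b ^ (1 - (p : ℤ) * j) = m := by
        rw [sub_eq_neg_add, zpow_add, zpow_one, zpow_neg, inv_mul_eq_iff_eq_mul]
        exact hj
      rwa [this]
    have h4 := (Int.natCast_dvd_natCast.2 hpn).trans ((hn _).1 h3)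
    have h5 : (p : ℤ) ∣ 1 := by
      have := dvd_add h4 (Dvd.intro j rfl)
      simpa using this
    have h6 := Int.natCast_dvd_natCast.1 (by simpa using h5 : (p : ℤ) ∣ ((1 : ℕ) : ℤ))
    exact hp.one_lt.ne' (Nat.dvd_one.1 h6)

lemma aux_normal {G : Type*} [Group G] [Finite G] (M : Subgroup G) (hM : IsCoatom M)
    (hN : M.Normal) : Nat.Prime M.index := by
  obtain ⟨b, hb⟩ : ∃ b, b ∉ M := by
    by_contra! h
    exact hM.1 (eq_top_iff.2 fun x _ => h x)
  refine aux_core M M hM le_rfl b hb fun g => ⟨1, ?_⟩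
  have htop : (Subgroup.zpowers (b : G ⧸ M)).comap (QuotientGroup.mk' M) = ⊤ := by
    refine hM.2 _ (lt_of_le_of_ne ?_ ?_)
    · intro x hx
      refine Subgroup.mem_comap.2 ?_
      rw [QuotientGroup.mk'_apply, (QuotientGroup.eq_one_iff x).2 hx]
      exact Subgroup.one_mem _
    · intro h
      apply hb
      rw [h]
      exact Subgroup.mem_comap.2 (Subgroup.mem_zpowers _)
  have hg : g ∈ (Subgroup.zpowers (b : G ⧸ M)).comap (QuotientGroup.mk' M) :=
    htop ▸ Subgroup.mem_top g
  obtain ⟨i, hi⟩ := Subgroup.mem_zpowers_iff.1 (Subgroup.mem_comap.1 hg)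
  rw [QuotientGroup.mk'_apply] at hi
  rw [QuotientGroup.mk_mul, QuotientGroup.mk_mul, QuotientGroup.mk_inv, ← hi]
  group

lemma aux_chain (n : ℕ) (P : Fin (n + 1) → Prop) (h0 : P 0) (hl : ¬ P (Fin.last n)) :
    ∃ i : Fin n, P i.castSucc ∧ ¬ P i.succ := by
  by_contra! h
  exact hl (Fin.induction h0 (fun i hi => h i hi) (Fin.last n))

lemma aux_ss {G : Type*} [Group G] [Finite G] (M : Subgroup G) (hM : IsCoatom M)
    (hs : IsSupersoluble G) : Nat.Prime M.index := by
  obtain ⟨n, c, hc, h0, hl, hstep⟩ := hs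
  obtain ⟨i, hi, hi'⟩ := aux_chain n (fun i => c i ≤ M) (by simp [h0])
    (by simpa [hl] using hM.1)
  obtain ⟨hle, hcyc⟩ := hstep i
  haveI := hc i.castSucc
  obtain ⟨q, hq⟩ := hcyc.exists_generator
  obtain ⟨⟨b, hbB⟩, rfl⟩ := QuotientGroup.mk_surjective q
  have hgen : ∀ x ∈ c i.succ, ∃ j : ℤ, (x : G ⧸ c i.castSucc) = (b : G ⧸ c i.castSucc) ^ j := by
    intro x hx
    obtain ⟨j, hj⟩ := Subgroup.mem_zpowers_iff.1 (hq (QuotientGroup.mk ⟨x, hx⟩))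
    refine ⟨j, ?_⟩
    rw [← QuotientGroup.mk_zpow, QuotientGroup.eq] at hj
    rw [← QuotientGroup.mk_zpow, eq_comm, QuotientGroup.eq]
    simpa [Subgroup.mem_subgroupOf] using hj
  refine aux_core M (c i.castSucc) hM hi b ?_ fun g => hgen _ ((hc i.succ).conj_mem b hbB g)
  intro hb
  apply hi'
  intro x hx
  obtain ⟨j, hj⟩ := hgen x hx
  rw [← QuotientGroup.mk_zpow, eq_comm, QuotientGroup.eq] at hj
  have := M.mul_mem (M.zpow_mem hb j) (hi hj)
  simpa using this

lemma aux_both {G : Type*} [Group G] [Finite G] (M : Subgroup G) (hM : IsCoatom M)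
    (hs : M.Normal ∨ IsSupersoluble (G ⧸ M.normalCore)) : Nat.Prime M.index := by
  rcases hs with h | h
  · exact aux_normal M hM h
  · have hsurj := QuotientGroup.mk'_surjective M.normalCore
    have hcm : (M.map (QuotientGroup.mk' M.normalCore)).comap (QuotientGroup.mk' M.normalCore)
        = M := by
      rw [Subgroup.comap_map_eq, QuotientGroup.ker_mk', sup_eq_left]
      exact M.normalCore_le
    rw [← hcm, Subgroup.index_comap_of_surjective _ hsurj]
    refine aux_ss _ ⟨?_, ?_⟩ h
    · intro ht
      rw [ht, Subgroup.comap_top] at hcm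
      exact hM.1 hcm.symm
    · intro K hK
      have h1 := (Subgroup.comap_lt_comap_of_surjective hsurj).2 hK
      rw [hcm] at h1
      have h2 := hM.2 _ h1
      rw [← Subgroup.comap_top (QuotientGroup.mk' M.normalCore)] at h2
      exact Subgroup.comap_injective hsurj h2

lemma aux_final {G : Type*} [Group G] [Finite G] (H L K : Subgroup G) (hmax : IsCoatom H)
    (hi : L = H) (ht : K = ⊤) (hs : (L.subgroupOf K).Normal ∨
      IsSupersoluble (K ⧸ (L.subgroupOf K).normalCore)) : Nat.Prime H.index := by
  subst ht hi
  have := aux_both (L.subgroupOf ⊤) ⟨?_, ?_⟩ hs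
  · have h2 : (L.subgroupOf ⊤).index = L.index := Subgroup.relIndex_top_right L
    rwa [h2] at this
  · intro h
    exact hmax.1 (top_le_iff.1 (Subgroup.subgroupOf_eq_top.1 h))
  · intro T hT
    have hsurj : Function.Surjective (⊤ : Subgroup G).subtype := fun x => ⟨⟨x, trivial⟩, rfl⟩
    have hinj : Function.Injective (⊤ : Subgroup G).subtype := Subgroup.subtype_injective _
    have hLc := Subgroup.comap_map_eq_self_of_injective hinj T
    rw [← hLc] at hT
    have h1 := (Subgroup.comap_lt_comap_of_surjective hsurj).1 hT
    rw [← hLc, hmax.2 _ h1, Subgroup.comap_top]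

/-- If `H` is a maximal subgroup of `G` which is `K`-`𝔘`-subnormal in `G`, then
the index `|G : H|` is a prime. -/
theorem index_prime_of_maximal_KUsubnormal (G : Type*) [Group G] [Finite G]
    (H : Subgroup G) (hmax : IsCoatom H) (hsub : IsKUSubnormal H) :
    Nat.Prime H.index := by
  obtain ⟨n, c, h0, hl, hstep⟩ := hsub
  obtain ⟨i, hi, hi'⟩ := aux_chain n (fun i => c i = H) h0 (by
    rw [hl]; exact fun h => hmax.1 h.symm)
  obtain ⟨hle, hs⟩ := hstep i
  have ht : c i.succ = ⊤ := by
    rw [hi] at hle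
    exact hmax.2 _ (lt_of_le_of_ne hle (Ne.symm hi'))
  exact aux_final H _ _ hmax hi ht hs
end

section
/- Let H and K be subgroups of a finite group G with H K-𝔘-subnormal in G. Then H ∩ K is K-𝔘-subnormal in K. -/
open Subgroup

lemma aux_cyclic {P D E : Type*} [Group P] [Group D] [Group E] (hD : IsCyclic D)
    (f : P →* D) (g : P →* E) (hg : Function.Surjective g) (h : f.ker ≤ g.ker) :
    IsCyclic E := by
  have h1 : IsCyclic (P ⧸ f.ker) :=
    isCyclic_of_injective (QuotientGroup.kerLift f) (QuotientGroup.kerLift_injective f)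
  refine isCyclic_of_surjective (QuotientGroup.lift f.ker g h) ?_
  intro e
  obtain ⟨p, rfl⟩ := hg e
  exact ⟨(p : P ⧸ f.ker), rfl⟩

lemma aux_ss_s7 {X Y Z : Type*} [Group X] [Group Y] [Group Z] (hY : IsSupersoluble Y)
    (f : X →* Y) (g : X →* Z) (hg : Function.Surjective g) (h : f.ker ≤ g.ker) :
    IsSupersoluble Z := by
  obtain ⟨n, c, hc, h0, h1, hs⟩ := hY
  have hN : ∀ i, (((c i).comap f).map g).Normal := fun i =>
    ((hc i).comap f).map g hg
  refine ⟨n, fun i => ((c i).comap f).map g, hN, ?_, ?_, ?_⟩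
  · simp only [h0]
    rw [eq_bot_iff]
    rintro _ ⟨x, hx, rfl⟩
    exact h hx
  · simp only [h1, comap_top]
    exact Subgroup.map_top_of_surjective g hg
  · intro i
    obtain ⟨hle, hcyc⟩ := hs i
    refine ⟨map_mono (comap_mono hle), ?_⟩
    haveI := (hc i.castSucc).subgroupOf (c i.succ)
    haveI := (hN i.castSucc).subgroupOf (((c i.succ).comap f).map g)
    refine aux_cyclic hcyc
      ((QuotientGroup.mk' ((c i.castSucc).subgroupOf (c i.succ))).comp
        (f.subgroupComap (c i.succ)))
      ((QuotientGroup.mk' ((((c i.castSucc).comap f).map g).subgroupOf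
        (((c i.succ).comap f).map g))).comp (g.subgroupMap ((c i.succ).comap f))) ?_ ?_
    · exact (QuotientGroup.mk'_surjective _).comp (g.subgroupMap_surjective _)
    · intro x hx
      rw [MonoidHom.mem_ker, MonoidHom.comp_apply, QuotientGroup.mk'_apply,
        QuotientGroup.eq_one_iff, mem_subgroupOf] at hx ⊢
      exact ⟨x, hx, rfl⟩

lemma aux_step {G : Type*} [Group G] (A B K : Subgroup G)
    (hi : (A.subgroupOf B).Normal ∨ IsSupersoluble (↥B ⧸ (A.subgroupOf B).normalCore)) :
    ((A ⊓ K).subgroupOf (B ⊓ K)).Normal ∨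
      IsSupersoluble (↥(B ⊓ K) ⧸ ((A ⊓ K).subgroupOf (B ⊓ K)).normalCore) := by
  rcases hi with hn | hss
  · left
    constructor
    intro x hx g
    have := hn.conj_mem ⟨x, x.2.1⟩ hx.1 ⟨g, g.2.1⟩
    exact ⟨this, K.mul_mem (K.mul_mem g.2.2 x.2.2) (K.inv_mem g.2.2)⟩
  · right
    refine aux_ss_s7 hss
      ((QuotientGroup.mk' (A.subgroupOf B).normalCore).comp
        (Subgroup.inclusion (inf_le_left : B ⊓ K ≤ B)))
      (QuotientGroup.mk' _) (QuotientGroup.mk'_surjective _) ?_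
    intro x hx
    rw [MonoidHom.mem_ker, MonoidHom.comp_apply, QuotientGroup.mk'_apply,
        QuotientGroup.eq_one_iff] at hx
    rw [MonoidHom.mem_ker, QuotientGroup.mk'_apply, QuotientGroup.eq_one_iff]
    intro g
    have := hx ⟨g, g.2.1⟩
    exact ⟨this, K.mul_mem (K.mul_mem g.2.2 x.2.2) (K.inv_mem g.2.2)⟩

/-- If `H` is `K`-`𝔘`-subnormal in `G` and `K` is any subgroup of `G`, then `H ∩ K`
is `K`-`𝔘`-subnormal in `K`. -/
theorem inf_KUsubnormalIn_of_KUsubnormal (G : Type*) [Group G] [Finite G]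
    (H K : Subgroup G) (h : IsKUSubnormal H) :
    IsKUSubnormalIn (H ⊓ K) K := by
  obtain ⟨n, c, h0, h1, hs⟩ := h
  refine ⟨n, fun i => c i ⊓ K, by simp only [h0], by simp only [h1, top_inf_eq], ?_⟩
  intro i
  obtain ⟨hle, hi⟩ := hs i
  refine ⟨inf_le_inf_right K hle, ?_⟩
  exact aux_step _ _ K hi
end

section
/- Let G be a finite minimal nonsupersoluble group. Then G is soluble and |π(G)| ≤ 3, where π(G) is the set of prime divisors of |G|. -/
open Subgroup

namespace MNS

/-- elementwise version of supersolubility -/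
def SS (G : Type*) [Group G] : Prop :=
  ∃ (n : ℕ) (c : ℕ → Subgroup G), (∀ i, (c i).Normal) ∧ c 0 = ⊥ ∧ c n = ⊤ ∧
    ∀ i < n, c i ≤ c (i + 1) ∧ ∃ x ∈ c (i + 1), ∀ y ∈ c (i + 1), ∃ k : ℤ, (x ^ k)⁻¹ * y ∈ c i

theorem cyc_iff {G : Type*} [Group G] (A B : Subgroup G) [hA : A.Normal] :
    (haveI := hA.subgroupOf B; IsCyclic (↥B ⧸ (A.subgroupOf B))) ↔
      ∃ x ∈ B, ∀ y ∈ B, ∃ k : ℤ, (x ^ k)⁻¹ * y ∈ A := by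
  haveI := hA.subgroupOf B
  constructor
  · intro h
    obtain ⟨g, hg⟩ := h.exists_generator
    obtain ⟨x, rfl⟩ := QuotientGroup.mk_surjective g
    refine ⟨x, x.2, fun y hy => ?_⟩
    obtain ⟨k, hk⟩ := Subgroup.mem_zpowers_iff.1 (hg (QuotientGroup.mk (⟨y, hy⟩ : B)))
    refine ⟨k, ?_⟩
    rw [← QuotientGroup.mk_zpow, QuotientGroup.eq] at hk
    simpa [Subgroup.mem_subgroupOf] using hk
  · rintro ⟨x, hx, h⟩
    refine ⟨⟨QuotientGroup.mk (⟨x, hx⟩ : B), fun g => ?_⟩⟩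
    obtain ⟨y, rfl⟩ := QuotientGroup.mk_surjective g
    obtain ⟨k, hk⟩ := h y y.2
    refine Subgroup.mem_zpowers_iff.2 ⟨k, ?_⟩
    rw [← QuotientGroup.mk_zpow, QuotientGroup.eq]
    simpa [Subgroup.mem_subgroupOf] using hk

theorem ss_iff (G : Type*) [Group G] : IsSupersoluble G ↔ SS G := by
  constructor
  · rintro ⟨n, c, hc, h0, h1, h⟩
    refine ⟨n, fun i => c (Fin.ofNat (n+1) i), fun i => hc _, ?_, ?_, ?_⟩
    · simpa using h0
    · rw [← h1]; congr 1; simp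
    · intro i hi
      have h2 := h ⟨i, hi⟩
      have e1 : Fin.ofNat (n+1) i = (⟨i, hi⟩ : Fin n).castSucc := by
        ext; simp; omega
      have e2 : Fin.ofNat (n+1) (i+1) = (⟨i, hi⟩ : Fin n).succ := by
        ext; simp; omega
      simp only [e1, e2]
      haveI := hc (⟨i, hi⟩ : Fin n).castSucc
      exact ⟨h2.1, (cyc_iff _ _).1 h2.2⟩
  · rintro ⟨n, c, hc, h0, h1, h⟩
    refine ⟨n, fun i => c i, fun i => hc _, by simpa using h0, by simpa using h1, ?_⟩
    intro i
    have h2 := h i i.2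
    haveI := hc i
    exact ⟨h2.1, (cyc_iff _ _).2 h2.2⟩

theorem SS.map {G H : Type*} [Group G] [Group H] (h : SS G) (f : G →* H)
    (hf : Function.Surjective f) : SS H := by
  obtain ⟨n, c, hc, h0, h1, h⟩ := h
  refine ⟨n, fun i => (c i).map f, fun i => (hc i).map f hf, by simp [h0], ?_, ?_⟩
  · simp only [h1]; exact Subgroup.map_top_of_surjective f hf
  · intro i hi
    obtain ⟨h2, x, hx, h3⟩ := h i hi
    refine ⟨Subgroup.map_mono h2, f x, Subgroup.mem_map_of_mem f hx, ?_⟩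
    rintro _ ⟨y, hy, rfl⟩
    obtain ⟨k, hk⟩ := h3 y hy
    exact ⟨k, by simpa using Subgroup.mem_map_of_mem f hk⟩

theorem SS.ext {G : Type*} [Group G] (N : Subgroup G) [N.Normal] (hN : ∃ x, N = zpowers x)
    (h : SS (G ⧸ N)) : SS G := by
  obtain ⟨n, c, hc, h0, h1, h⟩ := h
  obtain ⟨z, hz⟩ := hN
  refine ⟨n + 1, fun i => Nat.casesOn i ⊥ (fun i => (c i).comap (QuotientGroup.mk' N)),
    ?_, rfl, by simp [h1], ?_⟩
  · rintro (_ | i)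
    · exact (inferInstance : (⊥ : Subgroup G).Normal)
    · exact (hc i).comap _
  · rintro (_ | i) hi
    · refine ⟨bot_le, z, ?_, fun y hy => ?_⟩
      · simp [h0, hz]
      · simp [h0, hz] at hy
        obtain ⟨k, hk⟩ := Subgroup.mem_zpowers_iff.1 hy
        exact ⟨k, by simp [hk]⟩
    · obtain ⟨h2, x, hx, h3⟩ := h i (by omega)
      obtain ⟨x, rfl⟩ := QuotientGroup.mk'_surjective N x
      refine ⟨Subgroup.comap_mono h2, x, hx, fun y hy => ?_⟩
      obtain ⟨k, hk⟩ := h3 _ hy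
      exact ⟨k, by simpa using hk⟩

/-- a nontrivial normal subgroup of an SS group contains a nontrivial cyclic normal one -/
theorem SS.exists_cyclic {G : Type*} [Group G] (h : SS G) (N : Subgroup G) [N.Normal]
    (hN : N ≠ ⊥) : ∃ x : G, x ≠ 1 ∧ x ∈ N ∧ (zpowers x).Normal := by
  obtain ⟨n, c, hc, h0, h1, h⟩ := h
  have key : ∀ i ≤ n, c i ⊓ N = ⊥ ∨ ∃ x : G, x ≠ 1 ∧ x ∈ N ∧ (zpowers x).Normal := by
    intro i
    induction i with
    | zero => intro _; left; simp [h0]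
    | succ i ih =>
      intro hi
      rcases ih (by omega) with h4 | h4
      swap
      · exact Or.inr h4
      by_cases h5 : c (i+1) ⊓ N = ⊥
      · exact Or.inl h5
      right
      obtain ⟨h2, x, hx, h3⟩ := h i (by omega)
      haveI := hc i
      haveI := hc (i+1)
      have hcy : IsCyclic ↥(c (i+1) ⊓ N) := by
        have hq := (cyc_iff (c i) (c (i+1))).2 ⟨x, hx, h3⟩
        haveI := (hc i).subgroupOf (c (i+1))
        let f : ↥(c (i+1) ⊓ N) →* (↥(c (i+1)) ⧸ (c i).subgroupOf (c (i+1))) :=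
          (QuotientGroup.mk' _).comp (Subgroup.inclusion inf_le_left)
        refine isCyclic_of_injective f ?_
        rw [injective_iff_map_eq_one]
        intro a ha
        have ha2 : (a : G) ∈ c i := by
          simpa [f, Subgroup.mem_subgroupOf] using ha
        have : (a : G) ∈ c i ⊓ N := ⟨ha2, a.2.2⟩
        rw [h4] at this
        ext; simpa using this
      obtain ⟨g, hg⟩ := (Subgroup.isCyclic_iff_exists_zpowers_eq_top _).1 hcy
      refine ⟨g, ?_, ?_, ?_⟩
      · rintro rfl
        apply h5; rw [← hg]; simp
      · have : g ∈ c (i+1) ⊓ N := by rw [← hg]; exact mem_zpowers g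
        exact this.2
      · rw [hg]; infer_instance
  rcases key n le_rfl with h | h
  · rw [h1] at h; simp at h; exact absurd h hN
  · exact h

theorem SS.exists_prime {G : Type*} [Group G] [Finite G] [Nontrivial G] (h : SS G) :
    ∃ x : G, (orderOf x).Prime ∧ (zpowers x).Normal := by
  obtain ⟨x, hx, -, hn⟩ := h.exists_cyclic ⊤ (by simp)
  have h1 : orderOf x ≠ 1 := by simpa using hx
  have hp := Nat.minFac_prime h1
  have hd := Nat.minFac_dvd (orderOf x)
  obtain ⟨m, hm⟩ := hd
  have hpos := orderOf_pos x
  have hm0 : m ≠ 0 := by rintro rfl; omega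
  have ho : orderOf (x ^ m) = (orderOf x).minFac := by
    rw [orderOf_pow_of_dvd hm0 ⟨_, by rw [mul_comm]; exact hm⟩]
    conv_lhs => rw [hm]
    exact Nat.mul_div_cancel _ (Nat.pos_of_ne_zero hm0)
  refine ⟨x ^ m, by rwa [ho], ⟨?_⟩⟩
  intro y hy g
  obtain ⟨k, rfl⟩ := Subgroup.mem_zpowers_iff.1 hy
  obtain ⟨l, hl⟩ := Subgroup.mem_zpowers_iff.1 (hn.conj_mem x (mem_zpowers x) g)
  refine Subgroup.mem_zpowers_iff.2 ⟨l * k, ?_⟩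
  rw [← conj_zpow, ← conj_pow, ← hl, ← zpow_natCast, ← zpow_natCast, ← zpow_mul, ← zpow_mul,
    ← zpow_mul]
  congr 1; ring

theorem SS.solvable {n : ℕ} : ∀ {G : Type u} [Group G] [Finite G], Nat.card G ≤ n → SS G →
    Group.IsSolvable G := by
  induction n with
  | zero => intro G _ _ h; have := Nat.card_pos (α := G); omega
  | succ n ih =>
    intro G _ _ hn h
    rcases subsingleton_or_nontrivial G with hG | hG
    · infer_instance
    obtain ⟨x, hx, hxn⟩ := h.exists_prime
    have h1 : Nat.card (G ⧸ zpowers x) ≤ n := by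
      have := card_eq_card_quotient_mul_card_subgroup (zpowers x)
      rw [Nat.card_zpowers] at this
      have h2 := hx.two_le
      have := Nat.card_pos (α := G ⧸ zpowers x)
      nlinarith
    haveI := ih h1 (h.map (QuotientGroup.mk' _) (QuotientGroup.mk'_surjective _))
    haveI : Group.IsSolvable (zpowers x) := inferInstance
    exact solvable_of_ker_le_range (zpowers x).subtype (QuotientGroup.mk' (zpowers x))
      (by simp)

/-- normal `p`-complement -/
def PNil (p : ℕ) (G : Type*) [Group G] : Prop :=
  ∃ K : Subgroup G, K.Normal ∧ (Nat.card K).Coprime p ∧ ∃ a, K.index = p ^ a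

theorem card_comap_mk {G : Type*} [Group G] [Finite G] (N : Subgroup G) [N.Normal]
    (K : Subgroup (G ⧸ N)) :
    Nat.card (K.comap (QuotientGroup.mk' N)) = Nat.card K * Nat.card N := by
  have h1 := (K.comap (QuotientGroup.mk' N)).index_mul_card
  rw [Subgroup.index_comap_of_surjective _ (QuotientGroup.mk'_surjective N)] at h1
  have h2 := card_eq_card_quotient_mul_card_subgroup N
  have h3 := K.index_mul_card
  have h4 : 0 < K.index := Nat.pos_of_ne_zero K.index_ne_zero_of_finite
  rw [← h3] at h2
  have : K.index * Nat.card (K.comap (QuotientGroup.mk' N)) =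
    K.index * (Nat.card K * Nat.card N) := by rw [h1, h2]; ring
  exact Nat.eq_of_mul_eq_mul_left h4 this

theorem SS.pnil {n : ℕ} (p : ℕ) (hp : p.Prime) : ∀ {G : Type u} [Group G] [Finite G],
    Nat.card G ≤ n → SS G → (∀ q, q.Prime → q ∣ Nat.card G → p ≤ q) → PNil p G := by
  induction n with
  | zero => intro G _ _ h; have := Nat.card_pos (α := G); omega
  | succ n ih =>
    intro G _ _ hn h hpq
    rcases subsingleton_or_nontrivial G with hG | hG
    · exact ⟨⊤, inferInstance, by simp, 0, by simp⟩
    obtain ⟨x, hx, hxn⟩ := h.exists_prime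
    have hcard := card_eq_card_quotient_mul_card_subgroup (zpowers x)
    have h1 : Nat.card (G ⧸ zpowers x) ≤ n := by
      rw [Nat.card_zpowers] at hcard
      have h2 := hx.two_le
      have := Nat.card_pos (α := G ⧸ zpowers x)
      nlinarith
    obtain ⟨K', hK'n, hK'c, a, hK'i⟩ :=
      ih h1 (h.map (QuotientGroup.mk' _) (QuotientGroup.mk'_surjective _))
        (fun q hq hd => hpq q hq (hcard ▸ Dvd.dvd.mul_right hd _))
    set K := K'.comap (QuotientGroup.mk' (zpowers x)) with hK
    have hKc : Nat.card K = Nat.card K' * orderOf x := by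
      rw [hK, card_comap_mk, Nat.card_zpowers]
    have hKi : K.index = p ^ a := by
      rw [hK, Subgroup.index_comap_of_surjective _ (QuotientGroup.mk'_surjective _), hK'i]
    have hKn : K.Normal := hK'n.comap _
    by_cases hxp : orderOf x = p
    swap
    · refine ⟨K, hKn, ?_, a, hKi⟩
      rw [hKc]
      exact Nat.Coprime.mul_left hK'c ((Nat.coprime_primes hx hp).2 hxp)
    -- zpowers x central
    have hcen : zpowers x ≤ center G := by
      haveI : IsCyclic (zpowers x) := inferInstance
      have hAut : Nat.card (MulAut (zpowers x)) = p - 1 := by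
        rw [IsCyclic.card_mulAut, Nat.card_zpowers, hxp, Nat.totient_prime hp]
      have hcop : (Nat.card G).Coprime (Nat.card (MulAut (zpowers x))) := by
        rw [hAut]
        apply Nat.Coprime.symm
        refine Nat.coprime_of_dvd fun q hq hd hd' => ?_
        have h2 := hpq q hq hd'
        have h3 := Nat.le_of_dvd (by have := hp.two_le; omega) hd
        have := hp.two_le
        omega
      have htriv : ∀ g, (MulAut.conjNormal (H := zpowers x)) g = 1 := by
        intro g
        rw [← orderOf_eq_one_iff]
        exact Nat.eq_one_of_dvd_coprimes hcop
          ((orderOf_map_dvd _ g).trans (orderOf_dvd_natCard g)) (orderOf_dvd_natCard _)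
      intro y hy
      rw [Subgroup.mem_center_iff]
      intro g
      have := congrArg (fun f : MulAut (zpowers x) => ((f ⟨y, hy⟩ : zpowers x) : G)) (htriv g)
      simp only [MulAut.conjNormal_apply, MulAut.one_apply] at this
      rw [mul_inv_eq_iff_eq_mul] at this
      exact this
    have hle : zpowers x ≤ K := by
      intro y hy
      have : QuotientGroup.mk' (zpowers x) y = 1 := by simpa using hy
      simp only [hK, Subgroup.mem_comap, this, one_mem]
    -- complement
    haveI : ((zpowers x).subgroupOf K).Normal := hxn.subgroupOf K
    have hZc : Nat.card ((zpowers x).subgroupOf K) = p := by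
      rw [Nat.card_congr (Subgroup.subgroupOfEquivOfLe hle).toEquiv, Nat.card_zpowers, hxp]
    have hZi : ((zpowers x).subgroupOf K).index = Nat.card K' := by
      have h2 := ((zpowers x).subgroupOf K).index_mul_card
      rw [hZc, hKc, hxp] at h2
      exact Nat.eq_of_mul_eq_mul_right hp.pos h2
    obtain ⟨M, hM⟩ := Subgroup.exists_right_complement'_of_coprime
      (N := (zpowers x).subgroupOf K) (by rw [hZc, hZi]; exact hK'c.symm)
    have hMc : Nat.card M = Nat.card K' := by
      have h2 := hM.card_mul
      rw [hZc, hKc, hxp, mul_comm] at h2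
      exact Nat.eq_of_mul_eq_mul_right hp.pos h2
    have hMG : Nat.card (M.map K.subtype) = Nat.card K' := by
      rw [Subgroup.card_map_of_injective K.subtype_injective, hMc]
    refine ⟨M.map K.subtype, ⟨?_⟩, by rwa [hMG], a + 1, ?_⟩
    · rintro _ ⟨m, hm, rfl⟩ g
      have hmem : g * m * g⁻¹ ∈ K := hKn.conj_mem _ m.2 g
      obtain ⟨⟨⟨z, hz⟩, ⟨m', hm'⟩⟩, hzm⟩ := hM.2 (⟨_, hmem⟩ : K)
      have hzm2 : (z : G) * m' = g * m * g⁻¹ := congrArg Subtype.val hzm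
      have hz2 : (z : G) ∈ zpowers x := hz
      have hzc : Commute (z : G) m' := ((Subgroup.mem_center_iff.1 (hcen hz2)) m').symm
      have hpow : ∀ u : K, u ∈ M → (u : G) ^ Nat.card M = 1 := by
        intro u hu
        have := congrArg (fun v : M => ((v : K) : G)) (pow_card_eq_one' (x := (⟨u, hu⟩ : M)))
        exact this
      have h3 : (z : G) ^ Nat.card M = 1 := by
        have h4 := congrArg (· ^ Nat.card M) hzm2
        simp only [hzc.mul_pow, conj_pow, hpow m hm, hpow m' hm'] at h4
        simpa using h4
      have h5 : (z : G) ^ p = 1 := by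
        rw [← hxp]
        obtain ⟨k, hk⟩ := Subgroup.mem_zpowers_iff.1 hz2
        rw [← hk, ← zpow_natCast, ← zpow_mul, mul_comm, zpow_mul, zpow_natCast, pow_orderOf_eq_one,
          one_zpow]
      have h6 : (z : G) = 1 := by
        rw [← orderOf_eq_one_iff]
        exact Nat.eq_one_of_dvd_coprimes (hMc ▸ hK'c) (orderOf_dvd_of_pow_eq_one h3)
          (orderOf_dvd_of_pow_eq_one h5)
      refine ⟨m', hm', ?_⟩
      simp only [Subgroup.coe_subtype]
      rw [← hzm2, h6, one_mul]
    · have h2 := (M.map K.subtype).index_mul_card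
      rw [hMG, ← K.index_mul_card, hKi, hKc, hxp] at h2
      have h3 : 0 < Nat.card K' := Nat.card_pos
      apply Nat.eq_of_mul_eq_mul_right h3
      rw [h2]; ring


theorem PNil.factor {N : Type*} [Group N] [Finite N] {p : ℕ} [hp : Fact p.Prime] (h : PNil p N)
    (D : Subgroup N) (hDn : D.Normal) (hD : IsPGroup p D) (S : Sylow p N) (g : N) :
    ∃ k ∈ centralizer (D : Set N), ∃ s ∈ S, g = k * s := by
  obtain ⟨K, hKn, hKc, a, hKi⟩ := h
  have hsup : K ⊔ (S : Subgroup N) = ⊤ := by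
    rw [← Subgroup.index_eq_one]
    have h1 : (K ⊔ (S : Subgroup N)).index ∣ p ^ a := by
      rw [← hKi]; exact Subgroup.index_dvd_of_le le_sup_left
    have h2 : (K ⊔ (S : Subgroup N)).index ∣ (S : Subgroup N).index :=
      Subgroup.index_dvd_of_le le_sup_right
    have h3 : ¬ p ∣ (S : Subgroup N).index := S.not_dvd_index
    exact Nat.eq_one_of_dvd_coprimes
      (Nat.Coprime.pow_left a ((Nat.Prime.coprime_iff_not_dvd hp.out).2 h3)) h1 h2
  have hg : g ∈ K ⊔ (S : Subgroup N) := by rw [hsup]; trivial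
  obtain ⟨k, hk, s, hs, rfl⟩ := Subgroup.mem_sup_of_normal_left.1 hg
  refine ⟨k, ?_, s, hs, rfl⟩
  have hdis : Disjoint K D := by
    obtain ⟨b, hb⟩ := IsPGroup.iff_card.1 hD
    exact Subgroup.disjoint_of_coprime_natCard (by rw [hb]; exact Nat.Coprime.pow_right b hKc)
  rw [Subgroup.mem_centralizer_iff]
  intro d hd
  exact (Subgroup.commute_of_normal_of_disjoint K D hKn hDn hdis k d hk hd).symm

theorem exists_normalizing {G : Type*} [Group G] [Finite G] {p : ℕ} [hp : Fact p.Prime]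
    (P : Subgroup G) (hP : IsPGroup p P) (D : Subgroup G) (hD : D < P) :
    D < P ⊓ normalizer (D : Set G) := by
  haveI : Group.IsNilpotent P := hP.isNilpotent
  have hlt : D.subgroupOf P < ⊤ := by
    rw [lt_top_iff_ne_top, Ne, Subgroup.subgroupOf_eq_top]
    exact not_le_of_gt hD
  have h := Group.normalizerCondition_of_isNilpotent (G := P) _ hlt
  obtain ⟨-, x, hx, hxD⟩ := SetLike.lt_iff_le_and_exists.1 h
  refine SetLike.lt_iff_le_and_exists.2 ⟨le_inf hD.le Subgroup.le_normalizer, (x : G),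
    Subgroup.mem_inf.2 ⟨x.2, ?_⟩, ?_⟩
  · rw [Subgroup.mem_normalizer_iff] at hx ⊢
    intro y
    constructor
    · intro hy
      have := (hx ⟨y, hD.le hy⟩).1 (by simpa [Subgroup.mem_subgroupOf] using hy)
      simpa [Subgroup.mem_subgroupOf] using this
    · intro hy
      have hyP : y ∈ P := by
        have h2 := P.mul_mem (P.mul_mem (P.inv_mem x.2) (hD.le hy)) x.2
        simpa [mul_assoc] using h2
      have := (hx ⟨y, hyP⟩).2 (by simpa [Subgroup.mem_subgroupOf] using hy)
      simpa [Subgroup.mem_subgroupOf] using this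
  · simpa [Subgroup.mem_subgroupOf] using hxD

theorem mem_smul_sylow {G : Type*} [Group G] {p : ℕ} (P : Sylow p G) (g x : G) :
    x ∈ g • P ↔ g⁻¹ * x * g ∈ P := by
  rw [← SetLike.mem_coe, Sylow.coe_smul, Set.mem_smul_set_iff_inv_smul_mem, ← map_inv]
  simp

theorem conj_claim {G : Type*} [Group G] [Finite G] {p : ℕ} [hp : Fact p.Prime]
    (hyp : ∀ D : Subgroup G, D ≠ ⊥ → IsPGroup p D → PNil p (normalizer (D : Set G))) (n : ℕ) :
    ∀ P Q : Sylow p G, Nat.card G ≤ Nat.card (P ⊓ Q : Subgroup G) + n →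
      ∃ c ∈ centralizer ((P ⊓ Q : Subgroup G) : Set G), c • P = Q := by
  induction n with
  | zero =>
    intro P Q h
    have h1 : (P ⊓ Q : Subgroup G) = ⊤ := by
      apply Subgroup.eq_top_of_card_eq
      exact le_antisymm (Subgroup.card_le_card_group _) (by simpa using h)
    have h2 : (P : Subgroup G) = Q := by
      have := inf_eq_top_iff.1 h1
      rw [this.1, this.2]
    refine ⟨1, one_mem _, ?_⟩
    rw [one_smul]; exact Sylow.ext h2
  | succ n ih =>
    intro P Q h
    set D : Subgroup G := P ⊓ Q with hDdef
    by_cases hPQ : P = Q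
    · exact ⟨1, one_mem _, by rw [one_smul, hPQ]⟩
    by_cases hD : D = ⊥
    · obtain ⟨g, hg⟩ := MulAction.exists_smul_eq G P Q
      refine ⟨g, ?_, hg⟩
      rw [hD, Subgroup.mem_centralizer_iff]
      intro d hd
      have : d = 1 := by simpa using hd
      simp [this]
    have ih' : ∀ A B : Sylow p G, D < (A ⊓ B : Subgroup G) →
        ∃ c ∈ centralizer (D : Set G), c • A = B := by
      intro A B hAB
      have hlt : Nat.card D < Nat.card (A ⊓ B : Subgroup G) := by
        rw [← SetLike.coe_sort_coe, ← SetLike.coe_sort_coe (A ⊓ B : Subgroup G),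
          Nat.card_coe_set_eq, Nat.card_coe_set_eq]
        exact Set.ncard_lt_ncard hAB (Set.toFinite _)
      obtain ⟨c, hc, hc2⟩ := ih A B (by omega)
      exact ⟨c, Subgroup.centralizer_le hAB.le hc, hc2⟩
    have hDP : D < P := by
      refine lt_of_le_of_ne inf_le_left fun he => hPQ ?_
      have : (P : Subgroup G) ≤ Q := by rw [← he]; exact inf_le_right
      exact Sylow.ext (P.3 Q.2 this).symm
    have hDQ : D < Q := by
      refine lt_of_le_of_ne inf_le_right fun he => hPQ ?_
      have : (Q : Subgroup G) ≤ P := by rw [← he]; exact inf_le_left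
      exact Sylow.ext (Q.3 P.2 this)
    have hDp : IsPGroup p D := P.2.to_le hDP.le
    have hN := hyp D hD hDp
    set N : Subgroup G := normalizer (D : Set G) with hNdef
    have sub : ∀ A : Sylow p G, D < A → ∃ (S : Sylow p N) (R : Sylow p G),
        D < (A ⊓ R : Subgroup G) ∧ (S : Subgroup N).map N.subtype ≤ R ∧
        D < (S : Subgroup N).map N.subtype := by
      intro A hA
      have h1 := exists_normalizing (A : Subgroup G) A.2 D hA
      have hp1 : IsPGroup p ((A ⊓ N : Subgroup G).subgroupOf N) :=
        (A.2.to_le inf_le_left : IsPGroup p (A ⊓ N : Subgroup G)).comap_of_injective _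
          N.subtype_injective
      obtain ⟨S, hS⟩ := hp1.exists_le_sylow
      obtain ⟨R, hR⟩ := (S.2.map N.subtype).exists_le_sylow
      have hle : (A ⊓ N : Subgroup G) ≤ (S : Subgroup N).map N.subtype := by
        have h3 := Subgroup.map_mono (f := N.subtype) hS
        rwa [Subgroup.map_subgroupOf_eq_of_le inf_le_right] at h3
      exact ⟨S, R, lt_of_lt_of_le h1 (le_inf inf_le_left (hle.trans hR)), hR,
        lt_of_lt_of_le h1 hle⟩
    obtain ⟨S1, R1, hPR, hS1, hS1'⟩ := sub P hDP
    obtain ⟨S2, R2, hQR, hS2, hS2'⟩ := sub Q hDQ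
    obtain ⟨c1, hc1, e1⟩ := ih' P R1 hPR
    obtain ⟨c3, hc3, e3⟩ := ih' R2 Q (by rwa [inf_comm])
    obtain ⟨g, hg⟩ := MulAction.exists_smul_eq N S1 S2
    obtain ⟨k, hk, s, hs, rfl⟩ := hN.factor (D.subgroupOf N) (Subgroup.normal_in_normalizer)
      (hDp.comap_of_injective _ N.subtype_injective) S1 g
    have hkS : k • S1 = S2 := by
      rw [← hg, mul_smul]
      congr 1
      symm
      exact Sylow.smul_eq_iff_mem_normalizer.2 (Subgroup.le_normalizer hs)
    have hkc : (k : G) ∈ centralizer (D : Set G) := by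
      rw [Subgroup.mem_centralizer_iff] at hk ⊢
      intro d hd
      have := hk ⟨d, Subgroup.le_normalizer hd⟩ (by simpa [Subgroup.mem_subgroupOf] using hd)
      exact congrArg Subtype.val this
    have hlt2 : D < ((((k : G) • R1 : Sylow p G) : Subgroup G) ⊓ R2 : Subgroup G) := by
      refine lt_of_lt_of_le hS2' (le_inf ?_ hS2)
      rintro _ ⟨y, hy, rfl⟩
      change (y : G) ∈ (k : G) • R1
      rw [mem_smul_sylow]
      have hy2 : y ∈ S2 := hy
      rw [← hkS, mem_smul_sylow] at hy2
      exact hS1 ⟨_, hy2, rfl⟩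
    obtain ⟨c2, hc2, e2⟩ := ih' _ _ hlt2
    refine ⟨c3 * (c2 * (k * c1)), mul_mem hc3 (mul_mem hc2 (mul_mem hkc hc1)), ?_⟩
    rw [mul_smul, mul_smul, mul_smul, e1, e2, e3]

open scoped commutatorElement in
/-- A perfect group with all `p`-local subgroups `p`-nilpotent is a `p'`-group -/
theorem frob {G : Type*} [Group G] [Finite G] {p : ℕ} [hp : Fact p.Prime]
    (hyp : ∀ D : Subgroup G, D ≠ ⊥ → IsPGroup p D → PNil p (normalizer (D : Set G)))
    (hperf : _root_.commutator G = ⊤) : ¬ p ∣ Nat.card G := by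
  intro hdvd
  obtain ⟨P⟩ : Nonempty (Sylow p G) := inferInstance
  have hPbot : (P : Subgroup G) ≠ ⊥ := P.ne_bot_of_dvd_card hdvd
  have hfoc := Subgroup.commutator_inf_eq_focalSubgroup P
  rw [hperf, top_inf_eq] at hfoc
  have hle : (P : Subgroup G) ≤ ⁅(P : Subgroup G), (P : Subgroup G)⁆ := by
    conv_lhs => rw [hfoc]
    rw [Subgroup.focalSubgroup_def, Subgroup.closure_le]
    rintro _ ⟨hxu, x, hx, u, rfl⟩
    have hx' : x ∈ P := hx
    -- u x u⁻¹ ∈ P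
    have hy : u * x * u⁻¹ ∈ (P : Subgroup G) := by
      have h1 : x * (u * x⁻¹ * u⁻¹) ∈ (P : Subgroup G) := by simpa [commutatorElement_def, mul_assoc] using hxu
      have h2 := (P : Subgroup G).inv_mem (((P : Subgroup G).mul_mem_cancel_left hx).1 h1)
      simpa [mul_assoc] using h2
    obtain ⟨c, hc, e⟩ := conj_claim hyp (Nat.card G) (u • P) P (by omega)
    have hcu : c * u ∈ normalizer ((P : Subgroup G) : Set G) := by
      rw [← mul_smul] at e
      exact Sylow.smul_eq_iff_mem_normalizer.1 e
    have hcy : c * (u * x * u⁻¹) * c⁻¹ = u * x * u⁻¹ := by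
      rw [Subgroup.mem_centralizer_iff] at hc
      have := hc (u * x * u⁻¹) ⟨by
        change _ ∈ u • P
        rw [mem_smul_sylow]; simpa [mul_assoc] using hx', hy⟩
      rw [mul_inv_eq_iff_eq_mul, this]
    have hN := hyp P hPbot P.2
    obtain ⟨k, hk, s, hs, hks⟩ := hN.factor ((P : Subgroup G).subgroupOf _)
      (Subgroup.normal_in_normalizer)
      (P.2.comap_of_injective _ (Subgroup.subtype_injective _))
      (P.subtype Subgroup.le_normalizer) ⟨c * u, hcu⟩
    have hs' : (s : G) ∈ (P : Subgroup G) := hs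
    have hks' : c * u = k * s := congrArg Subtype.val hks
    have hsx : (s : G) * x * (s : G)⁻¹ ∈ (P : Subgroup G) :=
      (P : Subgroup G).mul_mem ((P : Subgroup G).mul_mem hs' hx) ((P : Subgroup G).inv_mem hs')
    have hkx : (k : G) * (s * x * (s : G)⁻¹) * (k : G)⁻¹ = s * x * (s : G)⁻¹ := by
      rw [Subgroup.mem_centralizer_iff] at hk
      have h3 := congrArg Subtype.val (hk ⟨_, Subgroup.le_normalizer hsx⟩ hsx)
      simp only [Subgroup.coe_mul] at h3
      rw [mul_inv_eq_iff_eq_mul, h3]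
    have hfin : u * x * u⁻¹ = s * x * (s : G)⁻¹ := by
      rw [← hcy, ← hkx]
      have : c * (u * x * u⁻¹) * c⁻¹ = (c * u) * x * (c * u)⁻¹ := by group
      rw [this, hks']; group
    have hcomm : ⁅x, u⁆ = ⁅x, (s : G)⁆ := by
      have a1 : ⁅x, u⁆ = x * (u * x * u⁻¹)⁻¹ := by rw [commutatorElement_def]; group
      have a2 : ⁅x, (s : G)⁆ = x * (s * x * (s : G)⁻¹)⁻¹ := by rw [commutatorElement_def]; group
      rw [a1, a2, hfin]
    rw [hcomm]
    exact Subgroup.commutator_mem_commutator hx hs'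
  haveI : Group.IsNilpotent P := P.2.isNilpotent
  haveI : Group.IsSolvable P := inferInstance
  haveI : Nontrivial P := (Subgroup.nontrivial_iff_ne_bot _).2 hPbot
  have hlt := Group.IsSolvable.commutator_lt_top_of_nontrivial P
  apply hlt.ne
  rw [eq_top_iff]
  intro x _
  have hx := hle x.2
  rw [← Subgroup.map_subtype_commutator] at hx
  obtain ⟨y, hy, hyx⟩ := hx
  have : y = x := Subtype.ext hyx
  rwa [← this]

theorem quot_prop {G : Type*} [Group G] (N : Subgroup G) [N.Normal]
    (h : ∀ H : Subgroup G, H ≠ ⊤ → SS H) (H : Subgroup (G ⧸ N)) (hH : H ≠ ⊤) : SS H := by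
  have h1 : H.comap (QuotientGroup.mk' N) ≠ ⊤ := by
    intro he
    apply hH
    rw [eq_top_iff]
    intro x _
    obtain ⟨y, rfl⟩ := QuotientGroup.mk'_surjective N x
    have : y ∈ H.comap (QuotientGroup.mk' N) := by rw [he]; trivial
    exact this
  have h2 := h _ h1
  refine h2.map ((QuotientGroup.mk' N).subgroupComap H) ?_
  rintro ⟨x, hx⟩
  obtain ⟨y, rfl⟩ := QuotientGroup.mk'_surjective N x
  exact ⟨⟨y, hx⟩, rfl⟩

theorem card_quot_lt {G : Type*} [Group G] [Finite G] (N : Subgroup G) (hN : N ≠ ⊥) :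
    Nat.card (G ⧸ N) < Nat.card G := by
  have := card_eq_card_quotient_mul_card_subgroup N
  have h2 : 1 < Nat.card N := by
    rw [Finite.one_lt_card_iff_nontrivial]; exact (Subgroup.nontrivial_iff_ne_bot _).2 hN
  have := Nat.card_pos (α := G ⧸ N)
  nlinarith

theorem solvable_main {n : ℕ} : ∀ {G : Type u} [Group G] [Finite G], Nat.card G ≤ n →
    (∀ H : Subgroup G, H ≠ ⊤ → SS H) → Group.IsSolvable G := by
  induction n with
  | zero => intro G _ _ h; have := Nat.card_pos (α := G); omega
  | succ n ih =>
    intro G _ _ hn h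
    by_contra hns
    rcases subsingleton_or_nontrivial G with hG | hG
    · exact hns inferInstance
    have hsimple : ∀ N : Subgroup G, N.Normal → N = ⊥ ∨ N = ⊤ := by
      intro N hNn
      by_contra! hc
      have h1 : Group.IsSolvable N := (h N hc.2).solvable le_rfl
      have h2 : Group.IsSolvable (G ⧸ N) :=
        ih (by have := card_quot_lt N hc.1; omega) (quot_prop N h)
      exact hns (solvable_of_ker_le_range N.subtype (QuotientGroup.mk' N) (by simp))
    have hperf : _root_.commutator G = ⊤ := by
      rcases hsimple (_root_.commutator G) inferInstance with h1 | h1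
      · exfalso
        apply hns
        rw [_root_.commutator_eq_bot_iff_center_eq_top] at h1
        exact Group.isSolvable_of_comm fun a b =>
          (Subgroup.mem_center_iff.1 (h1 ▸ Subgroup.mem_top b) a)
      · exact h1
    have hcard : Nat.card G ≠ 1 := Finite.one_lt_card.ne'
    haveI : Fact (Nat.card G).minFac.Prime := ⟨Nat.minFac_prime hcard⟩
    refine frob (p := (Nat.card G).minFac) ?_ hperf (Nat.minFac_dvd _)
    intro D hD hDp
    refine (h _ ?_).pnil _ Fact.out le_rfl ?_
    · intro he
      rw [Subgroup.normalizer_eq_top_iff] at he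
      rcases hsimple D he with h1 | h1
      · exact hD h1
      · apply hns
        haveI := hDp.isNilpotent
        haveI : Group.IsSolvable D := inferInstance
        rw [h1] at this
        exact Group.isSolvable_of_surjective (f := (⊤ : Subgroup G).subtype)
          (fun x => ⟨⟨x, trivial⟩, rfl⟩)
    · intro q hq hd
      exact Nat.minFac_le_of_dvd hq.two_le (hd.trans (card_subgroup_dvd_card _))


theorem exists_normal_pgroup {G : Type*} [Group G] [Finite G] [Nontrivial G]
    (h : Group.IsSolvable G) : ∃ (r : ℕ) (N : Subgroup G), r.Prime ∧ N.Normal ∧ N ≠ ⊥ ∧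
      IsPGroup r N := by
  classical
  obtain ⟨A, hAn, hAb, hAc⟩ : ∃ A : Subgroup G, A.Normal ∧ A ≠ ⊥ ∧ ∀ a b : A, a * b = b * a := by
    have hex : ∃ n, derivedSeries G n = ⊥ := h.solvable
    have hspec := Nat.find_spec hex
    rcases hn : Nat.find hex with _ | m
    · rw [hn, derivedSeries_zero] at hspec
      exact absurd hspec top_ne_bot
    · rw [hn, derivedSeries_succ] at hspec
      refine ⟨derivedSeries G m, inferInstance, Nat.find_min hex (by omega), fun a b => ?_⟩
      have h1 := Subgroup.commutator_eq_bot_iff_le_centralizer.1 hspec a.2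
      exact Subtype.ext ((Subgroup.mem_centralizer_iff.1 h1 b b.2).symm)
  haveI : Nontrivial A := (Subgroup.nontrivial_iff_ne_bot _).2 hAb
  have hcard : Nat.card A ≠ 1 := Finite.one_lt_card.ne'
  haveI : Fact (Nat.card A).minFac.Prime := ⟨Nat.minFac_prime hcard⟩
  obtain ⟨P⟩ : Nonempty (Sylow (Nat.card A).minFac A) := inferInstance
  have hPn : (P : Subgroup A).Normal := ⟨fun n hn g => by rwa [hAc g n, mul_inv_cancel_right]⟩
  haveI hPc : (P : Subgroup A).Characteristic := P.characteristic_of_normal hPn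
  refine ⟨_, (P : Subgroup A).map A.subtype, Fact.out (p := (Nat.card A).minFac.Prime),
    ConjAct.normal_of_characteristic_of_normal, ?_, P.2.map _⟩
  rw [Ne, Subgroup.map_eq_bot_iff_of_injective _ A.subtype_injective]
  exact P.ne_bot_of_dvd_card (Nat.minFac_dvd _)

theorem hall (π : ℕ → Prop) {n : ℕ} : ∀ {G : Type u} [Group G] [Finite G], Nat.card G ≤ n →
    Group.IsSolvable G → ∃ H : Subgroup G, (∀ q, q.Prime → q ∣ Nat.card H → π q) ∧
      (∀ q, q.Prime → π q → ¬ q ∣ H.index) := by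
  induction n with
  | zero => intro G _ _ h; have := Nat.card_pos (α := G); omega
  | succ n ih =>
    intro G _ _ hn hs
    rcases subsingleton_or_nontrivial G with hG | hG
    · refine ⟨⊤, fun q hq hd => ?_, fun q hq _ hd => ?_⟩
      · have : Nat.card (⊤ : Subgroup G) = 1 := by simp
        rw [this] at hd
        exact absurd (Nat.dvd_one.1 hd) hq.one_lt.ne'
      · rw [Subgroup.index_top] at hd
        exact absurd (Nat.dvd_one.1 hd) hq.one_lt.ne'
    obtain ⟨r, N, hr, hNn, hNb, hNp⟩ := exists_normal_pgroup hs
    haveI : Fact r.Prime := ⟨hr⟩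
    obtain ⟨H', h1, h2⟩ := ih (G := G ⧸ N) (by have := card_quot_lt N hNb; omega)
      (Group.isSolvable_of_surjective (QuotientGroup.mk'_surjective N))
    obtain ⟨b, hb⟩ := IsPGroup.iff_card.1 hNp
    set H := H'.comap (QuotientGroup.mk' N) with hH
    have hHc : Nat.card H = Nat.card H' * r ^ b := by rw [hH, card_comap_mk, hb]
    have hHi : H.index = H'.index := by
      rw [hH, Subgroup.index_comap_of_surjective _ (QuotientGroup.mk'_surjective _)]
    by_cases hπ : π r
    · refine ⟨H, fun q hq hd => ?_, fun q hq hd => by rw [hHi]; exact h2 q hq hd⟩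
      rw [hHc] at hd
      rcases hq.dvd_mul.1 hd with hd | hd
      · exact h1 q hq hd
      · rwa [(Nat.prime_dvd_prime_iff_eq hq hr).1 (hq.dvd_of_dvd_pow hd)]
    · have hcop : (r ^ b).Coprime (Nat.card H') := by
        apply Nat.Coprime.pow_left
        rw [Nat.Prime.coprime_iff_not_dvd hr]
        exact fun hd => hπ (h1 r hr hd)
      have hle : N ≤ H := by
        intro y hy
        have : QuotientGroup.mk' N y = 1 := by simpa using hy
        simp only [hH, Subgroup.mem_comap, this, one_mem]
      haveI : (N.subgroupOf H).Normal := hNn.subgroupOf H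
      have hrb : 0 < r ^ b := Nat.pow_pos hr.pos
      have hZc : Nat.card (N.subgroupOf H) = r ^ b := by
        rw [Nat.card_congr (Subgroup.subgroupOfEquivOfLe hle).toEquiv, hb]
      have hZi : (N.subgroupOf H).index = Nat.card H' := by
        have h2 := (N.subgroupOf H).index_mul_card
        rw [hZc, hHc] at h2
        exact Nat.eq_of_mul_eq_mul_right hrb h2
      obtain ⟨M, hM⟩ := Subgroup.exists_right_complement'_of_coprime
        (N := N.subgroupOf H) (by rw [hZc, hZi]; exact hcop)
      have hMc : Nat.card M = Nat.card H' := by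
        have h2 := hM.card_mul
        rw [hZc, hHc, mul_comm] at h2
        exact Nat.eq_of_mul_eq_mul_right hrb h2
      have hMG : Nat.card (M.map H.subtype) = Nat.card H' := by
        rw [Subgroup.card_map_of_injective H.subtype_injective, hMc]
      refine ⟨M.map H.subtype, fun q hq hd => h1 q hq (hMG ▸ hd), fun q hq hd hd2 => ?_⟩
      have h3 := (M.map H.subtype).index_mul_card
      rw [hMG, ← H.index_mul_card, hHi, hHc] at h3
      have h4 : (M.map H.subtype).index = H'.index * r ^ b := by
        apply Nat.eq_of_mul_eq_mul_right (Nat.card_pos (α := H'))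
        rw [h3]; ring
      rw [h4] at hd2
      rcases hq.dvd_mul.1 hd2 with hd2 | hd2
      · exact h2 q hq hd hd2
      · apply hπ
        rwa [← (Nat.prime_dvd_prime_iff_eq hq hr).1 (hq.dvd_of_dvd_pow hd2)]

theorem contains_sylow {G : Type*} [Group G] [Finite G] {q : ℕ} [hq : Fact q.Prime]
    (L : Subgroup G) (hL : ¬ q ∣ L.index) : ∃ R : Sylow q G, (R : Subgroup G) ≤ L := by
  obtain ⟨T⟩ : Nonempty (Sylow q L) := inferInstance
  have h1 : ¬ q ∣ ((T : Subgroup L).map L.subtype).index := by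
    rw [Subgroup.index_map_subtype, hq.out.dvd_mul, not_or]
    exact ⟨T.not_dvd_index, hL⟩
  refine ⟨(T.2.map L.subtype).toSylow h1, ?_⟩
  rw [IsPGroup.toSylow_coe]
  exact Subgroup.map_subtype_le _

theorem contains_normal_sylow {G : Type*} [Group G] [Finite G] {q : ℕ} [hq : Fact q.Prime]
    (L : Subgroup G) (hL : ¬ q ∣ L.index) (P : Sylow q G) (hP : (P : Subgroup G).Normal) :
    (P : Subgroup G) ≤ L := by
  obtain ⟨R, hR⟩ := contains_sylow L hL
  obtain ⟨g, hg⟩ := MulAction.exists_smul_eq G P R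
  rw [Sylow.smul_eq_of_normal] at hg
  rwa [hg]

theorem hall_sylow {G : Type*} [Group G] [Finite G] (hs : Group.IsSolvable G) (π : ℕ → Prop)
    {q : ℕ} [hq : Fact q.Prime] (hπ : π q) (Q : Sylow q G) :
    ∃ L : Subgroup G, (Q : Subgroup G) ≤ L ∧ (∀ r, r.Prime → r ∣ Nat.card L → π r) ∧
      (∀ r, r.Prime → π r → ¬ r ∣ L.index) := by
  obtain ⟨L, h1, h2⟩ := hall π le_rfl hs
  obtain ⟨R, hR⟩ := contains_sylow L (h2 q hq.out hπ)
  obtain ⟨g, hg⟩ := MulAction.exists_smul_eq G R Q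
  have hc : Nat.card (L.map (MulAut.conj g).toMonoidHom) = Nat.card L :=
    Subgroup.card_map_of_injective (MulAut.conj g).injective
  have hi : (L.map (MulAut.conj g).toMonoidHom).index = L.index := by
    have a1 := (L.map (MulAut.conj g).toMonoidHom).index_mul_card
    rw [hc, ← L.index_mul_card] at a1
    exact Nat.eq_of_mul_eq_mul_right Nat.card_pos a1
  refine ⟨L.map (MulAut.conj g).toMonoidHom, ?_, ?_, ?_⟩
  · intro x hx
    have hx' : x ∈ Q := hx
    rw [← hg, mem_smul_sylow] at hx'
    exact ⟨_, hR hx', by simp [mul_assoc]⟩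
  · rwa [hc]
  · rwa [hi]

theorem eq_top_of_primes {G : Type*} [Group G] (D : Subgroup G)
    (h : ∀ r, r.Prime → ∃ L ≤ D, ¬ r ∣ L.index) : D = ⊤ := by
  rw [← Subgroup.index_eq_one]
  by_contra hne
  obtain ⟨r, hr, hd⟩ := Nat.exists_prime_and_dvd hne
  obtain ⟨L, hL, hn⟩ := h r hr
  exact hn (hd.trans (Subgroup.index_dvd_of_le hL))

theorem proper_of_primes {G : Type*} [Group G] [Finite G]
    (h4 : 4 ≤ (Nat.card G).primeFactors.card) (L : Subgroup G) (p q r : ℕ)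
    (hL : ∀ s, s.Prime → s ∣ Nat.card L → s = p ∨ s = q ∨ s = r) : L ≠ ⊤ := by
  rintro rfl
  have : (Nat.card G).primeFactors ⊆ {p, q, r} := by
    intro s hs
    have hs1 := Nat.prime_of_mem_primeFactors hs
    have hs2 := Nat.dvd_of_mem_primeFactors hs
    simpa using hL s hs1 (by simpa using hs2)
  have h5 := (Finset.card_le_card this).trans Finset.card_le_three
  omega

theorem sylow_normal {G : Type u} [Group G] [Finite G] (hs : Group.IsSolvable G)
    (h : ∀ H : Subgroup G, H ≠ ⊤ → SS H) (h4 : 4 ≤ (Nat.card G).primeFactors.card)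
    {p : ℕ} [hp : Fact p.Prime] (hmax : ∀ r, r.Prime → r ∣ Nat.card G → r ≤ p)
    (P : Sylow p G) : (P : Subgroup G).Normal := by
  rw [← Subgroup.normalizer_eq_top_iff]
  apply eq_top_of_primes
  intro r hr
  by_cases hrG : r ∣ Nat.card G
  swap
  · exact ⟨⊥, bot_le, by simpa using hrG⟩
  by_cases hrp : r = p
  · subst hrp
    exact ⟨P, Subgroup.le_normalizer, P.not_dvd_index⟩
  have hlt : r < p := lt_of_le_of_ne (hmax r hr hrG) hrp
  obtain ⟨L, hPL, h1, h2⟩ := hall_sylow hs (fun s => s = p ∨ s = r) (Or.inl rfl) P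
  refine ⟨L, ?_, h2 r hr (Or.inr rfl)⟩
  have hLss : SS L := h L (proper_of_primes h4 L p r r (by
    intro s hs1 hs2
    rcases h1 s hs1 hs2 with e | e
    · exact Or.inl e
    · exact Or.inr (Or.inl e)))
  obtain ⟨K, hKn, hKc, a, hKi⟩ := hLss.pnil r hr le_rfl (by
    intro q hq hd
    rcases h1 q hq hd with e | e <;> omega)
  have hKp : IsPGroup p K := by
    refine IsPGroup.of_card (n := (Nat.card K).primeFactorsList.length) ?_
    apply Nat.eq_prime_pow_of_unique_prime_dvd Nat.card_pos.ne'
    intro d hd hdK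
    rcases h1 d hd (hdK.trans (card_subgroup_dvd_card K)) with e | e
    · exact e
    · subst e
      exact absurd hdK ((Nat.Prime.coprime_iff_not_dvd hd).1 hKc.symm)
  have hle : K ≤ (P.subtype hPL : Subgroup L) := hKp.le_sylow_of_normal _
  have hge : (P.subtype hPL : Subgroup L) ≤ K := by
    rw [← Subgroup.relIndex_eq_one]
    have a1 : K.relIndex (P.subtype hPL : Subgroup L) ∣ r ^ a := by
      rw [← hKi]; exact Subgroup.relIndex_dvd_index_of_normal _ _
    obtain ⟨b, hb⟩ := IsPGroup.iff_card.1 (P.subtype hPL).2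
    have a2 : K.relIndex (P.subtype hPL : Subgroup L) ∣ p ^ b := by
      rw [← hb]; exact Subgroup.relIndex_dvd_card _ _
    exact Nat.eq_one_of_dvd_coprimes
      (Nat.Coprime.pow _ _ ((Nat.coprime_primes hr hp.out).2 hrp)) a1 a2
  have heq : K = (P : Subgroup G).subgroupOf L := le_antisymm hle hge
  rw [heq] at hKn
  exact (Subgroup.normal_subgroupOf_iff_le_normalizer hPL).1 hKn

open scoped commutatorElement in
theorem comm_cyclic {H : Type*} [Group H] (z : H) (hz : (zpowers z).Normal) :
    _root_.commutator H ≤ centralizer (zpowers z : Set H) := by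
  rw [_root_.commutator_def, Subgroup.commutator_le]
  intro g _ h _
  have key : ∀ w ∈ zpowers z, (g * h) * w * (g * h)⁻¹ = (h * g) * w * (h * g)⁻¹ := by
    intro w hw
    obtain ⟨k, rfl⟩ := Subgroup.mem_zpowers_iff.1 hw
    obtain ⟨a, ha⟩ := Subgroup.mem_zpowers_iff.1 (hz.conj_mem z (mem_zpowers z) g)
    obtain ⟨b, hb⟩ := Subgroup.mem_zpowers_iff.1 (hz.conj_mem z (mem_zpowers z) h)
    have e : (g * h) * z * (g * h)⁻¹ = (h * g) * z * (h * g)⁻¹ := by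
      have e1 : (g * h) * z * (g * h)⁻¹ = g * (h * z * h⁻¹) * g⁻¹ := by group
      have e2 : (h * g) * z * (h * g)⁻¹ = h * (g * z * g⁻¹) * h⁻¹ := by group
      rw [e1, e2, ← hb, ← ha, ← conj_zpow, ← conj_zpow, ← ha, ← hb, ← zpow_mul, ← zpow_mul,
        mul_comm]
    rw [← conj_zpow, ← conj_zpow, e]
  rw [Subgroup.mem_centralizer_iff]
  intro y hy
  have hw := hz.conj_mem _ hy (g⁻¹ * h⁻¹)
  have := key _ hw
  have e1 : h * g * (g⁻¹ * h⁻¹ * y * (g⁻¹ * h⁻¹)⁻¹) * (h * g)⁻¹ = y := by group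
  have e2 : g * h * (g⁻¹ * h⁻¹ * y * (g⁻¹ * h⁻¹)⁻¹) * (g * h)⁻¹ = ⁅g, h⁆ * y * ⁅g, h⁆⁻¹ := by
    rw [commutatorElement_def]; group
  rw [e1, e2, mul_inv_eq_iff_eq_mul] at this
  exact this.symm

theorem ss_comm {L : Type*} [Group L] [Finite L] (h : SS L) {p : ℕ} [hp : Fact p.Prime]
    (N : Subgroup L) [hN : N.Normal] (hNp : IsPGroup p N)
    (hC : ¬ p ∣ (centralizer (N : Set L)).index) :
    _root_.commutator L ≤ centralizer (N : Set L) := by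
  intro x hx
  obtain ⟨n, c, hc, h0, h1, h⟩ := h
  obtain ⟨b, hb⟩ := IsPGroup.iff_card.1 hNp
  have step : ∀ i < n, ∀ t ∈ _root_.commutator L, ∀ y ∈ c (i+1), t * y * t⁻¹ * y⁻¹ ∈ c i := by
    intro i hi t ht y hy
    obtain ⟨h2, z, hz, h3⟩ := h i hi
    haveI := hc i
    haveI := hc (i+1)
    have hmap : (c (i+1)).map (QuotientGroup.mk' (c i)) = zpowers (QuotientGroup.mk' (c i) z) := by
      apply le_antisymm
      · rintro _ ⟨w, hw, rfl⟩
        obtain ⟨k, hk⟩ := h3 w hw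
        refine Subgroup.mem_zpowers_iff.2 ⟨k, ?_⟩
        rw [← map_zpow]
        exact QuotientGroup.eq.2 hk
      · rw [Subgroup.zpowers_le]
        exact Subgroup.mem_map_of_mem _ hz
    have hnorm : (zpowers (QuotientGroup.mk' (c i) z)).Normal := by
      rw [← hmap]
      exact (hc (i+1)).map _ (QuotientGroup.mk'_surjective _)
    have ht' : QuotientGroup.mk' (c i) t ∈ _root_.commutator (L ⧸ c i) := by
      have := Subgroup.mem_map_of_mem (QuotientGroup.mk' (c i)) ht
      rw [_root_.commutator_def, Subgroup.map_commutator] at this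
      exact Subgroup.commutator_mono le_top le_top this
    have h5 := Subgroup.mem_centralizer_iff.1 (comm_cyclic _ hnorm ht') (QuotientGroup.mk' (c i) y)
      (by rw [← hmap]; exact Subgroup.mem_map_of_mem _ hy)
    rw [← QuotientGroup.eq_one_iff]
    change QuotientGroup.mk' (c i) (t * y * t⁻¹ * y⁻¹) = 1
    rw [map_mul, map_mul, map_mul, ← h5, map_inv, map_inv]
    group
  have key : ∀ i ≤ n, ∃ m : ℕ, ∀ y ∈ c i ⊓ N, x ^ p ^ m * y = y * x ^ p ^ m := by
    intro i
    induction i with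
    | zero =>
      intro _
      refine ⟨0, fun y hy => ?_⟩
      rw [h0] at hy
      have : y = 1 := by simpa using hy
      simp [this]
    | succ i ih =>
      intro hi
      obtain ⟨m, hm⟩ := ih (by omega)
      refine ⟨m + b, fun y hy => ?_⟩
      set t := x ^ p ^ m with ht
      have htc : t ∈ _root_.commutator L := Subgroup.pow_mem _ hx _
      have ha1 := step i (by omega) t htc y hy.1
      have ha2 : t * y * t⁻¹ * y⁻¹ ∈ N := N.mul_mem (hN.conj_mem y hy.2 t) (N.inv_mem hy.2)
      set a := t * y * t⁻¹ * y⁻¹ with ha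
      have hta : t * a = a * t := hm a ⟨ha1, ha2⟩
      have hty : t * y = a * y * t := by rw [ha]; group
      have hk : ∀ k : ℕ, t ^ k * y = a ^ k * y * t ^ k := by
        intro k
        induction k with
        | zero => simp
        | succ k ihk =>
          have hcom : Commute t (a ^ k) := (show Commute t a from hta).pow_right k
          calc t ^ (k+1) * y = t * (t ^ k * y) := by rw [pow_succ']; group
            _ = (t * a ^ k) * y * t ^ k := by rw [ihk]; group
            _ = a ^ k * (t * y) * t ^ k := by rw [hcom.eq]; group
            _ = a ^ (k + 1) * y * t ^ (k+1) := by rw [hty, pow_succ, pow_succ']; group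
      have hak : a ^ p ^ b = 1 := by
        have := congrArg Subtype.val (pow_card_eq_one' (x := (⟨a, ha2⟩ : N)))
        rw [hb] at this
        exact this
      have := hk (p ^ b)
      rw [hak, one_mul, ht, ← pow_mul, ← pow_add] at this
      exact this
  obtain ⟨m, hm⟩ := key n le_rfl
  have hxm : x ^ p ^ m ∈ centralizer (N : Set L) := by
    rw [Subgroup.mem_centralizer_iff]
    intro y hy
    exact (hm y (by rw [h1]; exact ⟨trivial, hy⟩)).symm
  have hxi : x ^ (centralizer (N : Set L)).index ∈ centralizer (N : Set L) :=
    Subgroup.pow_index_mem _ x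
  have hcop : (p ^ m).Coprime (centralizer (N : Set L)).index :=
    Nat.Coprime.pow_left _ ((Nat.Prime.coprime_iff_not_dvd hp.out).2 hC)
  rw [← QuotientGroup.eq_one_iff, ← orderOf_eq_one_iff]
  rw [← QuotientGroup.eq_one_iff, QuotientGroup.mk_pow] at hxm hxi
  exact Nat.eq_one_of_dvd_coprimes hcop (orderOf_dvd_of_pow_eq_one hxm)
    (orderOf_dvd_of_pow_eq_one hxi)

theorem meets_center {G : Type*} [Group G] [Finite G] {p : ℕ} [hp : Fact p.Prime]
    (P N : Subgroup G) (hP : IsPGroup p P) [hN : N.Normal] (hNP : N ≤ P) (hNb : N ≠ ⊥) :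
    ∃ x ∈ N, x ≠ 1 ∧ x ∈ centralizer (P : Set G) := by
  letI : MulAction P N :=
    MulAction.compHom N ((MulAut.conjNormal (H := N)).comp P.subtype)
  have hsm : ∀ (g : P) (x : N), ((g • x : N) : G) = g * x * (g : G)⁻¹ := fun g x => rfl
  obtain ⟨b, hb⟩ := IsPGroup.iff_card.1 (hP.to_le hNP)
  have hb0 : b ≠ 0 := by
    rintro rfl
    apply hNb
    rw [pow_zero] at hb
    exact Subgroup.card_eq_one.1 hb
  have hd : p ∣ Nat.card N := by rw [hb]; exact dvd_pow_self p hb0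
  obtain ⟨x, hx, hx1⟩ := hP.exists_fixed_point_of_prime_dvd_card_of_fixed_point N hd
    (a := 1) (by intro g; apply Subtype.ext; rw [hsm]; simp)
  refine ⟨x, x.2, fun h => hx1 (Subtype.ext h).symm, ?_⟩
  rw [Subgroup.mem_centralizer_iff]
  intro g hg
  have := congrArg Subtype.val (hx ⟨g, hg⟩)
  rw [hsm, mul_inv_eq_iff_eq_mul] at this
  exact this


open scoped commutatorElement in
theorem minnormal_cyclic {G : Type u} [Group G] [Finite G] (hs : Group.IsSolvable G)
    (h : ∀ H : Subgroup G, H ≠ ⊤ → SS H) (h4 : 4 ≤ (Nat.card G).primeFactors.card)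
    {p : ℕ} [hp : Fact p.Prime] (P : Sylow p G) (hP : (P : Subgroup G).Normal)
    (N : Subgroup G) [hN : N.Normal] (hNP : N ≤ P) (hNb : N ≠ ⊥)
    (hmin : ∀ M : Subgroup G, M.Normal → M ≤ N → M ≠ ⊥ → M = N) : ∃ x, N = zpowers x := by
  have hNp : IsPGroup p N := P.2.to_le hNP
  -- `P` centralizes `N`
  have hcen : N ≤ centralizer ((P : Subgroup G) : Set G) := by
    obtain ⟨x, hx, hx1, hxc⟩ := meets_center (P : Subgroup G) N P.2 hNP hNb
    have := hmin (N ⊓ centralizer ((P : Subgroup G) : Set G)) inferInstance inf_le_left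
      (fun he => hx1 (by
        have h1 : x ∈ N ⊓ centralizer ((P : Subgroup G) : Set G) := ⟨hx, hxc⟩
        rw [he] at h1
        simpa using h1))
    rw [← this]
    exact inf_le_right
  have hPC : (P : Subgroup G) ≤ centralizer (N : Set G) := Subgroup.le_centralizer_iff.1 hcen
  have hcomm : ∀ x ∈ N, ∀ y ∈ N, x * y = y * x := fun x hx y hy =>
    Subgroup.mem_centralizer_iff.1 (hPC (hNP hy)) x hx
  have hLcomm : ∀ L : Subgroup G, L ≠ ⊤ → ¬ p ∣ L.index → ∀ g ∈ L, ∀ k ∈ L,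
      ⁅g, k⁆ ∈ centralizer (N : Set G) := by
    intro L hL hLi g hg k hk
    have hPL := contains_normal_sylow L hLi P hP
    have hNL : N ≤ L := hNP.trans hPL
    have hle : (P.subtype hPL : Subgroup L) ≤ centralizer ((N.subgroupOf L : Subgroup L) : Set L) := by
      intro u hu
      rw [Subgroup.mem_centralizer_iff]
      intro v hv
      exact Subtype.ext (Subgroup.mem_centralizer_iff.1 (hPC hu) v hv)
    have hidx : ¬ p ∣ (centralizer ((N.subgroupOf L : Subgroup L) : Set L)).index :=
      fun hd => (P.subtype hPL).not_dvd_index (hd.trans (Subgroup.index_dvd_of_le hle))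
    have h1 := ss_comm (h L hL) (N.subgroupOf L)
      (hNp.comap_of_injective _ L.subtype_injective) hidx
      (Subgroup.commutator_mem_commutator (Subgroup.mem_top (⟨g, hg⟩ : L))
        (Subgroup.mem_top (⟨k, hk⟩ : L)))
    rw [Subgroup.mem_centralizer_iff] at h1 ⊢
    intro y hy
    exact congrArg Subtype.val (h1 ⟨y, hNL hy⟩ hy)
  -- every Sylow subgroup acts by power maps
  have hQ : ∀ (q : ℕ) [Fact q.Prime] (Q : Sylow q G), ∀ g ∈ Q, ∀ y ∈ N,
      g * y * g⁻¹ ∈ zpowers y := by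
    intro q hq Q g hg
    have hhall : ∀ r : ℕ, ∃ L : Subgroup G, (Q : Subgroup G) ≤ L ∧ L ≠ ⊤ ∧ ¬ p ∣ L.index ∧
        (r.Prime → ¬ r ∣ L.index) := by
      intro r
      obtain ⟨L, a1, a2, a3⟩ := hall_sylow hs (fun s => s = p ∨ s = q ∨ s = r)
        (Or.inr (Or.inl rfl)) Q
      exact ⟨L, a1, proper_of_primes h4 L p q r a2, a3 p hp.out (Or.inl rfl),
        fun hr => a3 r hr (Or.inr (Or.inr rfl))⟩
    have hD : ∀ k : G, ⁅g, k⁆ ∈ centralizer (N : Set G) := by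
      let f := QuotientGroup.mk' (centralizer (N : Set G))
      have htop : (centralizer {f g}).comap f = ⊤ := by
        apply eq_top_of_primes
        intro r hr
        obtain ⟨L, a1, a2, a3, a4⟩ := hhall r
        refine ⟨L, fun k hk => ?_, a4 hr⟩
        have h1 := hLcomm L a2 a3 g (a1 hg) k hk
        have h2 : f ⁅g, k⁆ = 1 := (QuotientGroup.eq_one_iff _).2 h1
        rw [map_commutatorElement, commutatorElement_eq_one_iff_mul_comm] at h2
        rw [Subgroup.mem_comap, Subgroup.mem_centralizer_iff]
        rintro _ rfl
        exact h2
      intro k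
      have hk : k ∈ (centralizer {f g}).comap f := by rw [htop]; trivial
      rw [Subgroup.mem_comap, Subgroup.mem_centralizer_iff] at hk
      rw [← QuotientGroup.eq_one_iff]
      change f ⁅g, k⁆ = 1
      rw [map_commutatorElement, commutatorElement_eq_one_iff_mul_comm]
      exact hk _ rfl
    obtain ⟨L, a1, a2, a3, -⟩ := hhall q
    have hNL : N ≤ L := hNP.trans (contains_normal_sylow L a3 P hP)
    obtain ⟨x, hx1, hxN, hxn⟩ := (h L a2).exists_cyclic (N.subgroupOf L) (by
      rw [Ne, Subgroup.subgroupOf_eq_bot, disjoint_iff, inf_eq_left.2 hNL]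
      exact hNb)
    obtain ⟨k, hk⟩ := Subgroup.mem_zpowers_iff.1
      (hxn.conj_mem x (mem_zpowers x) ⟨g, a1 hg⟩)
    have hk' : (x : G) ^ k = g * x * g⁻¹ := congrArg Subtype.val hk
    let E : Subgroup G :=
      { carrier := {y | y ∈ N ∧ g * y * g⁻¹ = y ^ k}
        one_mem' := ⟨N.one_mem, by simp⟩
        mul_mem' := by
          rintro u v ⟨hu, hu2⟩ ⟨hv, hv2⟩
          refine ⟨N.mul_mem hu hv, ?_⟩
          rw [(show Commute u v from hcomm u hu v hv).mul_zpow, ← hu2, ← hv2]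
          group
        inv_mem' := by
          rintro u ⟨hu, hu2⟩
          refine ⟨N.inv_mem hu, ?_⟩
          rw [inv_zpow, ← hu2]; group }
    have hEn : E.Normal := by
      refine ⟨?_⟩
      rintro y ⟨hy, hy2⟩ u
      refine ⟨hN.conj_mem y hy u, ?_⟩
      have hc := Subgroup.mem_centralizer_iff.1 (hD u) (u * (g * y * g⁻¹) * u⁻¹)
        (hN.conj_mem _ (hN.conj_mem y hy g) u)
      rw [conj_zpow, ← hy2]
      have e1 : g * (u * y * u⁻¹) * g⁻¹ =
          (⁅g, u⁆ * (u * (g * y * g⁻¹) * u⁻¹)) * ⁅g, u⁆⁻¹ := by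
        rw [commutatorElement_def]; group
      rw [e1, ← hc]; group
    have hEN : E = N := hmin E hEn (fun y hy => hy.1) (by
      intro he
      have : (x : G) ∈ E := ⟨hxN, hk'.symm⟩
      rw [he] at this
      exact hx1 (Subtype.ext (by simpa using this)))
    intro y hy
    rw [← hEN] at hy
    exact Subgroup.mem_zpowers_iff.2 ⟨k, hy.2.symm⟩
  haveI : Nontrivial N := (Subgroup.nontrivial_iff_ne_bot N).2 hNb
  obtain ⟨⟨x, hxN⟩, hx1⟩ := exists_ne (1 : N)
  have hzN : zpowers x ≤ N := by rwa [Subgroup.zpowers_le]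
  have hnorm : (zpowers x).Normal := by
    rw [← Subgroup.normalizer_eq_top_iff]
    apply eq_top_of_primes
    intro q hq
    haveI : Fact q.Prime := ⟨hq⟩
    obtain ⟨Q⟩ : Nonempty (Sylow q G) := inferInstance
    refine ⟨Q, fun g hg => ?_, Q.not_dvd_index⟩
    rw [Subgroup.mem_normalizer_iff]
    intro w
    constructor
    · intro hw
      exact (Subgroup.zpowers_le.2 hw) (hQ q Q g hg w (hzN hw))
    · intro hw
      have := (Subgroup.zpowers_le.2 hw) (hQ q Q g⁻¹ ((Q : Subgroup G).inv_mem hg) _ (hzN hw))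
      simpa [mul_assoc] using this
  refine ⟨x, (hmin _ hnorm hzN ?_).symm⟩
  rw [Ne, Subgroup.zpowers_eq_bot]
  exact fun he => hx1 (Subtype.ext he)

theorem primes_main {n : ℕ} : ∀ {G : Type u} [Group G] [Finite G], Nat.card G ≤ n →
    (∀ H : Subgroup G, H ≠ ⊤ → SS H) → 4 ≤ (Nat.card G).primeFactors.card → SS G := by
  induction n with
  | zero => intro G _ _ h; have := Nat.card_pos (α := G); omega
  | succ n ih =>
    intro G _ _ hn h h4
    have hs : Group.IsSolvable G := solvable_main le_rfl h
    have hG0 : Nat.card G ≠ 0 := Nat.card_pos.ne'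
    have hne : (Nat.card G).primeFactors.Nonempty := Finset.card_pos.1 (by omega)
    obtain ⟨p, hpm, hmax⟩ := (Nat.card G).primeFactors.exists_max_image id hne
    have hpp := Nat.prime_of_mem_primeFactors hpm
    have hpd := Nat.dvd_of_mem_primeFactors hpm
    haveI : Fact p.Prime := ⟨hpp⟩
    obtain ⟨P⟩ : Nonempty (Sylow p G) := inferInstance
    have hP := sylow_normal (p := p) hs h h4
      (fun r hr hd => hmax r (Nat.mem_primeFactors.2 ⟨hr, hd, hG0⟩)) P
    obtain ⟨N, hNmin⟩ := (Set.toFinite {N : Subgroup G | N.Normal ∧ N ≤ P ∧ N ≠ ⊥}).exists_minimal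
      ⟨P, hP, le_rfl, P.ne_bot_of_dvd_card hpd⟩
    obtain ⟨⟨hNn, hNP, hNb⟩, hNm⟩ := hNmin
    have hcyc := minnormal_cyclic hs h h4 P hP N hNP hNb
      (fun M hM hMN hMb => le_antisymm hMN (hNm ⟨hM, hMN.trans hNP, hMb⟩ hMN))
    refine SS.ext N hcyc ?_
    have hNp : IsPGroup p N := P.2.to_le hNP
    by_cases hpi : p ∣ N.index
    · refine ih (by have := card_quot_lt N hNb; omega) (quot_prop N h) (h4.trans ?_)
      apply Finset.card_le_card
      intro q hq
      have hq1 := Nat.prime_of_mem_primeFactors hq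
      have hq2 := Nat.dvd_of_mem_primeFactors hq
      refine Nat.mem_primeFactors.2 ⟨hq1, ?_, Nat.card_pos.ne'⟩
      change q ∣ N.index
      by_cases hqp : q = p
      · rwa [hqp]
      obtain ⟨b, hb⟩ := IsPGroup.iff_card.1 hNp
      rw [← N.index_mul_card, hb] at hq2
      rcases hq1.dvd_mul.1 hq2 with hd | hd
      · exact hd
      · exact absurd ((Nat.prime_dvd_prime_iff_eq hq1 hpp).1 (hq1.dvd_of_dvd_pow hd)) hqp
    · obtain ⟨H, h1, h2⟩ := hall (fun q => q ≠ p) le_rfl hs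
      have hH : H ≠ ⊤ := by
        rintro rfl
        exact h1 p hpp (by simpa using hpd) rfl
      have hsup : N ⊔ H = ⊤ := by
        apply eq_top_of_primes
        intro r hr
        by_cases hrp : r = p
        · exact ⟨N, le_sup_left, by rwa [hrp]⟩
        · exact ⟨H, le_sup_right, h2 r hr hrp⟩
      refine (h H hH).map ((QuotientGroup.mk' N).comp H.subtype) ?_
      intro x
      obtain ⟨g, rfl⟩ := QuotientGroup.mk'_surjective N x
      have hg : g ∈ N ⊔ H := by rw [hsup]; trivial
      obtain ⟨y, hy, z, hz, rfl⟩ := Subgroup.mem_sup_of_normal_left.1 hg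
      refine ⟨⟨z, hz⟩, ?_⟩
      have : QuotientGroup.mk' N y = 1 := by simpa using hy
      simp only [MonoidHom.comp_apply, Subgroup.coe_subtype, map_mul, this, one_mul]

end MNS

/-- A minimal nonsupersoluble group is soluble and has at most `3` prime divisors. -/
theorem minimalNonsupersoluble_solvable_and_primes (G : Type*) [Group G] [Finite G]
    (h : IsMinimalNonsupersoluble G) :
    IsSolvable G ∧ (Nat.card G).primeFactors.card ≤ 3 := by
  obtain ⟨h1, h2⟩ := h
  rw [MNS.ss_iff] at h1
  have h3 : ∀ H : Subgroup G, H ≠ ⊤ → MNS.SS H := fun H hH => (MNS.ss_iff H).1 (h2 H hH)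
  refine ⟨MNS.solvable_main le_rfl h3, ?_⟩
  by_contra hc
  exact h1 (MNS.primes_main le_rfl h3 (by omega))
end
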